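/- Local limit theorem, dimension 1, stationary environment: if both 1/c and c̄ are μ-integrable, then for μ-a.e. ω and every even integer x₀: lim_{n→∞} √(2n)·P_0^ω[S_{2n}=x₀] = (c̄(x₀)(ω)/√π)·√(∫(1/c)dμ / ∫c̄ dμ). -/

import Mathlib

open MeasureTheory Filter
open scoped BigOperators ENNReal

/-- `cbar κ x = c(x−1,x) + c(x,x+1)`, where `κ x` denotes the conductance of
the edge `{x, x+1}` of `ℤ`. -/
noncomputable def cbar (κ : ℤ → ℝ) (x : ℤ) : ℝ := κ (x - 1) + κ x

/-- One-step transition probabilities of the nearest-neighbour conductance walk. -/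
noncomputable def step (κ : ℤ → ℝ) (x y : ℤ) : ℝ :=
  if y = x + 1 then κ x / cbar κ x
  else if y = x - 1 then κ (x - 1) / cbar κ x else 0

/-- `walk κ n x y = P_x[S_n = y]`, the `n`-step transition probabilities. -/
noncomputable def walk (κ : ℤ → ℝ) : ℕ → ℤ → ℤ → ℝ
  | 0, x, y => if y = x then 1 else 0
  | (n+1), x, y =>
      walk κ n x (y - 1) * step κ (y - 1) y + walk κ n x (y + 1) * step κ (y + 1) y

/-- The heat kernel `h_n(x) = P_0[S_n = x] / c̄(x)`. -/
noncomputable def heatK (κ : ℤ → ℝ) (n : ℕ) (x : ℤ) : ℝ := walk κ n 0 x / cbar κ x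

/-- The energy `‖h_n‖² = Σ_x h_n(x)² c̄(x)`. -/
noncomputable def energy (κ : ℤ → ℝ) (n : ℕ) : ℝ :=
  ∑' x : ℤ, (heatK κ n x) ^ 2 * cbar κ x

/-- The stationary environment of conductances seen from `ω`:
`c(x,x+1)(ω) = c(Tˣ ω)`. -/
noncomputable def envC {Ω : Type*} (T : Equiv.Perm Ω) (c : Ω → ℝ) (ω : Ω) : ℤ → ℝ :=
  fun x => c ((T ^ x) ω)

/-! The return probabilities are read off their generating function. With `h_n = heatK κ n` and
`G_z = ∑ z ^ n h_n`, the value `1 / G_z(0)` is the minimal Dirichlet energy of a function equal to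
`1` at `0`, and `G_z(0)` is the minimal energy of a leaking flow out of `0` (Thomson). Trial
functions decaying exponentially in the resistance from `0`, and trial flows decaying exponentially
in the `c̄`-mass, at rates of order `√(1 - z)`, see the environment only through the Birkhoff
averages of `1 / c` and of `c̄`, and the two bounds agree in the limit:
`√(1 - z) G_z(0) → √(∫ 1 / c / ∫ c̄) / 2`. Since `h_{2n}(0)`
decreases in `n`, Karamata's Tauberian theorem turns this into
`√n h_{2n}(0) → √(∫ 1 / c / ∫ c̄) / √(2π)`, and the regularity of the heat kernel carries the limit
from `0` to every even site. -/

open scoped Topology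

section Birkhoff

variable {Ω : Type*}

/-- The running maximum `max(0, S₁, …, Sₙ)` of the Birkhoff sums of `f`, encoded by the recursion
`Mₙ₊₁ = max(0, f + Mₙ ∘ T)` on which the maximal ergodic argument rests. -/
noncomputable def birkhoffMax (T : Ω → Ω) (f : Ω → ℝ) : ℕ → Ω → ℝ
  | 0, _ => 0
  | n + 1, x => max 0 (f x + birkhoffMax T f n (T x))

lemma birkhoffMax_nonneg (T : Ω → Ω) (f : Ω → ℝ) (n : ℕ) (x : Ω) : 0 ≤ birkhoffMax T f n x := by
  cases n with
  | zero => exact le_rfl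
  | succ n => exact le_max_left _ _

lemma birkhoffMax_le_succ (T : Ω → Ω) (f : Ω → ℝ) (n : ℕ) (x : Ω) :
    birkhoffMax T f n x ≤ birkhoffMax T f (n + 1) x := by
  induction n generalizing x with
  | zero => exact birkhoffMax_nonneg T f 1 x
  | succ n ih => exact max_le_max le_rfl (add_le_add le_rfl (ih (T x)))

lemma birkhoffMax_mono (T : Ω → Ω) (f : Ω → ℝ) (x : Ω) :
    Monotone fun n => birkhoffMax T f n x :=
  monotone_nat_of_le_succ fun n => birkhoffMax_le_succ T f n x

lemma birkhoffSum_le_birkhoffMax (T : Ω → Ω) (f : Ω → ℝ) (n : ℕ) (x : Ω) :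
    birkhoffSum T f n x ≤ birkhoffMax T f n x := by
  induction n generalizing x with
  | zero => simp [birkhoffMax]
  | succ n ih =>
    rw [birkhoffSum_succ']
    exact (add_le_add le_rfl (ih (T x))).trans (le_max_right _ _)

lemma abs_birkhoffMax_succ_sub_le (T : Ω → Ω) (f : Ω → ℝ) (n : ℕ) (x : Ω) :
    |birkhoffMax T f (n + 1) x - birkhoffMax T f n (T x)| ≤ |f x| := by
  have h := birkhoffMax_nonneg T f n (T x)
  rw [birkhoffMax]
  rcases max_cases 0 (f x + birkhoffMax T f n (T x)) with ⟨hmax, hle⟩ | ⟨hmax, -⟩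
  · rw [hmax, zero_sub, abs_neg, abs_of_nonneg h]
    linarith [neg_le_abs (f x)]
  · rw [hmax, add_sub_cancel_right]

lemma bddAbove_birkhoffMax_comp_iff (T : Ω → Ω) (f : Ω → ℝ) (x : Ω) :
    BddAbove (Set.range fun n => birkhoffMax T f n (T x)) ↔
      BddAbove (Set.range fun n => birkhoffMax T f n x) := by
  simp only [bddAbove_def, Set.forall_mem_range]
  constructor
  · rintro ⟨C, hC⟩
    refine ⟨max 0 (f x + C), fun n => ?_⟩
    cases n with
    | zero => exact le_max_left _ _
    | succ n => exact max_le_max le_rfl (add_le_add le_rfl (hC n))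
  · rintro ⟨C, hC⟩
    refine ⟨C - f x, fun n => ?_⟩
    linarith [(le_max_right 0 (f x + birkhoffMax T f n (T x))).trans (hC (n + 1))]

lemma tendsto_birkhoffMax_succ_sub {T : Ω → Ω} {f : Ω → ℝ} {x : Ω}
    (hx : ¬BddAbove (Set.range fun n => birkhoffMax T f n x)) :
    Tendsto (fun n => birkhoffMax T f (n + 1) x - birkhoffMax T f n (T x)) atTop (𝓝 (f x)) := by
  have hTx : Tendsto (fun n => birkhoffMax T f n (T x)) atTop atTop :=
    tendsto_atTop_atTop_of_monotone' (birkhoffMax_mono T f (T x))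
      (mt (bddAbove_birkhoffMax_comp_iff T f x).mp hx)
  refine tendsto_const_nhds.congr' ?_
  filter_upwards [hTx.eventually_ge_atTop (-f x)] with n hn
  rw [birkhoffMax, max_eq_right (by linarith), add_sub_cancel_right]

variable [MeasurableSpace Ω] {μ : Measure Ω} {T : Ω → Ω} {f : Ω → ℝ}

lemma integral_comp_of_measurePreserving {Ω' E : Type*} [MeasurableSpace Ω']
    [NormedAddCommGroup E] [NormedSpace ℝ E] {ν : Measure Ω'} {S : Ω → Ω'}
    (hS : MeasurePreserving S μ ν) {g : Ω' → E} (hg : AEStronglyMeasurable g ν) :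
    ∫ x, g (S x) ∂μ = ∫ y, g y ∂ν := by
  rw [← integral_map hS.aemeasurable (by rwa [hS.map_eq]), hS.map_eq]

lemma integrable_birkhoffMax (hT : MeasurePreserving T μ μ) (hf : Integrable f μ) (n : ℕ) :
    Integrable (birkhoffMax T f n) μ := by
  induction n with
  | zero => exact integrable_zero _ _ _
  | succ n ih => exact (integrable_zero _ _ _).sup (hf.add (hT.integrable_comp_of_integrable ih))

lemma integral_birkhoffMax_comp_le (hT : MeasurePreserving T μ μ) (hf : Integrable f μ) (n : ℕ) :
    ∫ x, birkhoffMax T f n (T x) ∂μ ≤ ∫ x, birkhoffMax T f (n + 1) x ∂μ := by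
  have hn := integrable_birkhoffMax hT hf n
  rw [integral_comp_of_measurePreserving hT hn.aestronglyMeasurable]
  exact integral_mono hn (integrable_birkhoffMax hT hf (n + 1)) (birkhoffMax_le_succ T f n)

lemma integral_nonneg_of_ae_not_bddAbove_birkhoffMax (hT : MeasurePreserving T μ μ)
    (hf : Integrable f μ)
    (h : ∀ᵐ x ∂μ, ¬BddAbove (Set.range fun n => birkhoffMax T f n x)) :
    0 ≤ ∫ x, f x ∂μ := by
  have hint (n : ℕ) := integrable_birkhoffMax hT hf n
  have hintT (n : ℕ) : Integrable (fun x => birkhoffMax T f n (T x)) μ :=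
    hT.integrable_comp_of_integrable (hint n)
  have hlim : Tendsto
      (fun n => ∫ x, (birkhoffMax T f (n + 1) x - birkhoffMax T f n (T x)) ∂μ) atTop
      (𝓝 (∫ x, f x ∂μ)) :=
    tendsto_integral_of_dominated_convergence (fun x => |f x|)
      (fun n => ((hint (n + 1)).sub (hintT n)).aestronglyMeasurable) hf.abs
      (fun n => .of_forall fun x => abs_birkhoffMax_succ_sub_le T f n x)
      (h.mono fun x => tendsto_birkhoffMax_succ_sub)
  refine ge_of_tendsto' hlim fun n => ?_
  rw [integral_sub (hint (n + 1)) (hintT n)]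
  exact sub_nonneg.mpr (integral_birkhoffMax_comp_le hT hf n)

lemma ae_bddAbove_birkhoffMax (hT : Ergodic T μ) (hf : Integrable f μ) (hneg : ∫ x, f x ∂μ < 0) :
    ∀ᵐ x ∂μ, BddAbove (Set.range fun n => birkhoffMax T f n x) := by
  set E : Set Ω := {x | BddAbove (Set.range fun n => birkhoffMax T f n x)}
  have hE : NullMeasurableSet E μ := by
    have : E = ⋃ j : ℕ, ⋂ n, {x | birkhoffMax T f n x ≤ j} := by
      ext x
      simp only [E, Set.mem_ofPred_eq, bddAbove_def, Set.forall_mem_range, Set.mem_iUnion,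
        Set.mem_iInter]
      refine ⟨fun ⟨C, hC⟩ => ?_, fun ⟨j, hj⟩ => ⟨j, hj⟩⟩
      obtain ⟨j, hj⟩ := exists_nat_ge C
      exact ⟨j, fun n => (hC n).trans hj⟩
    rw [this]
    exact .iUnion fun j => .iInter fun n => nullMeasurableSet_le
      (integrable_birkhoffMax hT.toMeasurePreserving hf n).aemeasurable aemeasurable_const
  have hinv : T ⁻¹' E = E := Set.ext (bddAbove_birkhoffMax_comp_iff T f)
  rcases hT.quasiErgodic.ae_empty_or_univ₀ hE hinv.eventuallyEq with hempty | huniv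
  · exact absurd (integral_nonneg_of_ae_not_bddAbove_birkhoffMax hT.toMeasurePreserving hf
      (eventuallyEq_empty.mp hempty)) hneg.not_ge
  · exact eventuallyEq_univ.mp huniv

variable [IsProbabilityMeasure μ]

lemma ae_eventually_birkhoffAverage_lt (hT : Ergodic T μ) (hf : Integrable f μ) {a : ℝ}
    (ha : ∫ x, f x ∂μ < a) : ∀ᵐ x ∂μ, ∀ᶠ n in atTop, birkhoffAverage ℝ T f n x < a := by
  obtain ⟨b, hfb, hba⟩ := exists_between ha
  have hneg : ∫ x, (f x - b) ∂μ < 0 := by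
    rw [integral_sub hf (integrable_const b)]
    simpa using hfb
  filter_upwards [ae_bddAbove_birkhoffMax hT (hf.sub (integrable_const b)) hneg] with x ⟨C, hC⟩
  have hsum (n : ℕ) : birkhoffSum T f n x ≤ n * b + C := by
    have h := (birkhoffSum_le_birkhoffMax T (fun y => f y - b) n x).trans (hC ⟨n, rfl⟩)
    simp only [birkhoffSum, Finset.sum_sub_distrib, Finset.sum_const, Finset.card_range,
      nsmul_eq_mul] at h ⊢
    linarith
  have hlim : Tendsto (fun n : ℕ => b + C / n) atTop (𝓝 b) := by
    simpa using tendsto_const_nhds.add (tendsto_const_div_atTop_nhds_zero_nat C)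
  filter_upwards [hlim.eventually_lt_const hba, eventually_gt_atTop 0] with n hn hn0
  have : (0 : ℝ) < n := Nat.cast_pos.mpr hn0
  calc birkhoffAverage ℝ T f n x = birkhoffSum T f n x / n := by
        rw [birkhoffAverage, smul_eq_mul, inv_mul_eq_div]
    _ ≤ (n * b + C) / n := by gcongr; exact hsum n
    _ = b + C / n := by field_simp
    _ < a := hn

theorem ae_tendsto_birkhoffAverage (hT : Ergodic T μ) (hf : Integrable f μ) :
    ∀ᵐ x ∂μ, Tendsto (fun n => birkhoffAverage ℝ T f n x) atTop (𝓝 (∫ y, f y ∂μ)) := by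
  have hupper (g : Ω → ℝ) (hg : Integrable g μ) : ∀ᵐ x ∂μ, ∀ k : ℕ,
      ∀ᶠ n in atTop, birkhoffAverage ℝ T g n x < ∫ y, g y ∂μ + 1 / ((k : ℝ) + 1) :=
    ae_all_iff.mpr fun k => ae_eventually_birkhoffAverage_lt hT hg
      (lt_add_of_pos_right _ Nat.one_div_pos_of_nat)
  filter_upwards [hupper f hf, hupper (-f) hf.neg] with x hx hx'
  simp only [birkhoffAverage_neg, Pi.neg_apply, integral_neg] at hx'
  refine tendsto_order.mpr ⟨fun a ha => ?_, fun a ha => ?_⟩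
  · obtain ⟨k, hk⟩ := exists_nat_one_div_lt (sub_pos.mpr ha)
    filter_upwards [hx' k] with n hn
    linarith
  · obtain ⟨k, hk⟩ := exists_nat_one_div_lt (sub_pos.mpr ha)
    filter_upwards [hx k] with n hn
    linarith

end Birkhoff

section Karamata

/-- The expectation of `φ (exp (-τ))` for a random variable `τ` with the Gamma distribution of
shape `ρ` and rate `1`. -/
noncomputable def gammaMean (ρ : ℝ) (φ : ℝ → ℝ) : ℝ :=
  (Real.Gamma ρ)⁻¹ * ∫ t in Set.Ioi (0 : ℝ), Real.exp (-t) * t ^ (ρ - 1) * φ (Real.exp (-t))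

/-- The Abel mean of order `ρ` of the sequence `u`, normalised for growth like `n ^ (ρ - 1)`. The
test function `φ` reweights the terms according to the position of `n` relative to the scale
`1 / (1 - s)`. -/
noncomputable def abelMean (ρ : ℝ) (u : ℕ → ℝ) (φ : ℝ → ℝ) (s : ℝ) : ℝ :=
  (1 - s) ^ ρ * ∑' n, u n * s ^ n * φ (s ^ n)

variable {ρ L : ℝ} {u : ℕ → ℝ} {φ ψ : ℝ → ℝ} {s : ℝ}

lemma exp_neg_mem_Icc {t : ℝ} (ht : 0 ≤ t) : Real.exp (-t) ∈ Set.Icc (0 : ℝ) 1 :=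
  ⟨(Real.exp_pos _).le, Real.exp_le_one_iff.2 (neg_nonpos.2 ht)⟩

lemma pow_mem_Icc_of_mem_Ioo (hs : s ∈ Set.Ioo (0 : ℝ) 1) (n : ℕ) :
    s ^ n ∈ Set.Icc (0 : ℝ) 1 :=
  ⟨pow_nonneg hs.1.le n, pow_le_one₀ hs.1.le hs.2.le⟩

lemma exists_abs_le_on_unitInterval (hφ : Continuous φ) :
    ∃ C, ∀ y ∈ Set.Icc (0 : ℝ) 1, |φ y| ≤ C :=
  isCompact_Icc.exists_bound_of_continuousOn hφ.continuousOn

lemma integrableOn_gammaMean (hρ : 0 < ρ) (hφ : Continuous φ) :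
    IntegrableOn (fun t => Real.exp (-t) * t ^ (ρ - 1) * φ (Real.exp (-t))) (Set.Ioi 0) := by
  obtain ⟨C, hC⟩ := exists_abs_le_on_unitInterval hφ
  refine (Real.GammaIntegral_convergent hρ).mul_bdd (c := C)
    (by fun_prop : Continuous fun t => φ (Real.exp (-t))).aestronglyMeasurable ?_
  filter_upwards [ae_restrict_mem measurableSet_Ioi] with t ht
  exact hC _ (exp_neg_mem_Icc (le_of_lt ht))

lemma summable_abelMean (hu : ∀ n, 0 ≤ u n) (hs : s ∈ Set.Ioo (0 : ℝ) 1)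
    (hsum : Summable fun n => u n * s ^ n) (hφ : Continuous φ) :
    Summable fun n => u n * s ^ n * φ (s ^ n) := by
  obtain ⟨C, hC⟩ := exists_abs_le_on_unitInterval hφ
  refine (hsum.mul_right C).of_norm_bounded fun n => ?_
  have h0 : 0 ≤ u n * s ^ n := mul_nonneg (hu n) (pow_nonneg hs.1.le n)
  rw [Real.norm_eq_abs, abs_mul, abs_of_nonneg h0]
  exact mul_le_mul_of_nonneg_left (hC _ (pow_mem_Icc_of_mem_Ioo hs n)) h0

lemma gammaMean_add (hρ : 0 < ρ) (hφ : Continuous φ) (hψ : Continuous ψ) :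
    gammaMean ρ (fun y => φ y + ψ y) = gammaMean ρ φ + gammaMean ρ ψ := by
  simp only [gammaMean, mul_add]
  rw [integral_add (integrableOn_gammaMean hρ hφ) (integrableOn_gammaMean hρ hψ), mul_add]

lemma gammaMean_const_mul (a : ℝ) : gammaMean ρ (fun y => a * φ y) = a * gammaMean ρ φ := by
  simp only [gammaMean, mul_left_comm _ a, integral_const_mul]

lemma gammaMean_pow (hρ : 0 < ρ) (k : ℕ) :
    gammaMean ρ (fun y => y ^ k) = (1 / ((k : ℝ) + 1)) ^ ρ := by
  have hk : (0 : ℝ) < k + 1 := by positivity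
  have hexp : ∀ t : ℝ, Real.exp (-t) * t ^ (ρ - 1) * Real.exp (-t) ^ k
      = t ^ (ρ - 1) * Real.exp (-((k + 1) * t)) := fun t => by
    rw [mul_comm (Real.exp (-t)), mul_assoc, ← pow_succ', ← Real.exp_nat_mul]
    push_cast
    ring_nf
  simp only [gammaMean, hexp, Real.integral_rpow_mul_exp_neg_mul_Ioi hρ hk]
  have := (Real.Gamma_pos_of_pos hρ).ne'
  field_simp

lemma gammaMean_const (hρ : 0 < ρ) (a : ℝ) : gammaMean ρ (fun _ => a) = a := by
  have hone : gammaMean ρ (fun _ => 1) = 1 := by simpa using gammaMean_pow hρ 0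
  simpa [hone] using gammaMean_const_mul (ρ := ρ) (φ := fun _ => 1) a

lemma gammaMean_mono (hρ : 0 < ρ) (hφ : Continuous φ) (hψ : Continuous ψ)
    (h : ∀ y ∈ Set.Icc (0 : ℝ) 1, φ y ≤ ψ y) : gammaMean ρ φ ≤ gammaMean ρ ψ := by
  refine mul_le_mul_of_nonneg_left (setIntegral_mono_on (integrableOn_gammaMean hρ hφ)
    (integrableOn_gammaMean hρ hψ) measurableSet_Ioi fun t ht => ?_)
    (inv_nonneg.2 (Real.Gamma_pos_of_pos hρ).le)
  have ht : 0 < t := ht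
  gcongr
  exact h _ (exp_neg_mem_Icc ht.le)

lemma abelMean_mono (hu : ∀ n, 0 ≤ u n) (hs : s ∈ Set.Ioo (0 : ℝ) 1)
    (hsum : Summable fun n => u n * s ^ n) (hφ : Continuous φ) (hψ : Continuous ψ)
    (h : ∀ y ∈ Set.Icc (0 : ℝ) 1, φ y ≤ ψ y) : abelMean ρ u φ s ≤ abelMean ρ u ψ s := by
  refine mul_le_mul_of_nonneg_left ((summable_abelMean hu hs hsum hφ).tsum_le_tsum (fun n => ?_)
    (summable_abelMean hu hs hsum hψ)) (Real.rpow_nonneg (sub_nonneg.2 hs.2.le) ρ)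
  exact mul_le_mul_of_nonneg_left (h _ (pow_mem_Icc_of_mem_Ioo hs n))
    (mul_nonneg (hu n) (pow_nonneg hs.1.le n))

lemma abelMean_add (hu : ∀ n, 0 ≤ u n) (hs : s ∈ Set.Ioo (0 : ℝ) 1)
    (hsum : Summable fun n => u n * s ^ n) (hφ : Continuous φ) (hψ : Continuous ψ) :
    abelMean ρ u (fun y => φ y + ψ y) s = abelMean ρ u φ s + abelMean ρ u ψ s := by
  simp only [abelMean, mul_add]
  rw [(summable_abelMean hu hs hsum hφ).tsum_add (summable_abelMean hu hs hsum hψ), mul_add]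

lemma abelMean_const_mul (a : ℝ) :
    abelMean ρ u (fun y => a * φ y) s = a * abelMean ρ u φ s := by
  simp only [abelMean, mul_left_comm _ a, tsum_mul_left]

lemma tendsto_one_sub_div_one_sub_pow (k : ℕ) :
    Tendsto (fun s : ℝ => (1 - s) / (1 - s ^ (k + 1))) (𝓝[<] 1) (𝓝 (1 / ((k : ℝ) + 1))) := by
  have hgeom : Tendsto (fun s : ℝ => ∑ i ∈ Finset.range (k + 1), s ^ i) (𝓝[<] 1)
      (𝓝 ((k : ℝ) + 1)) := by
    have hcont : Continuous fun s : ℝ => ∑ i ∈ Finset.range (k + 1), s ^ i := by fun_prop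
    simpa using (hcont.tendsto 1).mono_left nhdsWithin_le_nhds
  refine (tendsto_const_nhds.div hgeom (by positivity)).congr' ?_
  filter_upwards [self_mem_nhdsWithin] with s hs
  have hs : 1 - s ≠ 0 := (sub_pos.2 hs).ne'
  rw [← mul_neg_geom_sum s (k + 1), div_mul_cancel_left₀ hs, Pi.div_apply, one_div]

lemma tendsto_pow_nhdsLT_one {k : ℕ} (hk : k ≠ 0) :
    Tendsto (fun s : ℝ => s ^ k) (𝓝[<] 1) (𝓝[<] 1) := by
  refine tendsto_nhdsWithin_iff.2 ⟨?_, ?_⟩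
  · simpa using ((continuous_pow k).tendsto (1 : ℝ)).mono_left nhdsWithin_le_nhds
  · filter_upwards [Ioo_mem_nhdsLT zero_lt_one] with s hs
    exact pow_lt_one₀ hs.1.le hs.2 hk

lemma tendsto_abelMean_pow (hlim : Tendsto (abelMean ρ u fun _ => 1) (𝓝[<] 1) (𝓝 L))
    (hρ : 0 < ρ) (k : ℕ) :
    Tendsto (abelMean ρ u fun y => y ^ k) (𝓝[<] 1) (𝓝 (L * gammaMean ρ fun y => y ^ k)) := by
  rw [gammaMean_pow hρ, mul_comm]
  have hratio := (tendsto_one_sub_div_one_sub_pow k).rpow_const (p := ρ) (Or.inr hρ.le)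
  refine (hratio.mul (hlim.comp (tendsto_pow_nhdsLT_one k.succ_ne_zero))).congr' ?_
  filter_upwards [Ioo_mem_nhdsLT zero_lt_one] with s hs
  have hs' : 0 < 1 - s ^ (k + 1) := sub_pos.2 (pow_lt_one₀ hs.1.le hs.2 k.succ_ne_zero)
  have hterm : ∀ n, s ^ n * (s ^ n) ^ k = (s ^ (k + 1)) ^ n := fun n => by
    rw [← pow_succ', ← pow_mul, ← pow_mul, mul_comm]
  simp only [Function.comp_apply, abelMean, Nat.succ_eq_add_one, mul_one, mul_assoc, hterm]
  rw [Real.div_rpow (sub_nonneg.2 hs.2.le) hs'.le, ← mul_assoc,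
    div_mul_cancel₀ _ (Real.rpow_pos_of_pos hs' ρ).ne']

lemma abelMean_nonneg (hu : ∀ n, 0 ≤ u n) (hs : s ∈ Set.Ioo (0 : ℝ) 1) (h0 : ∀ y, 0 ≤ φ y) :
    0 ≤ abelMean ρ u φ s :=
  mul_nonneg (Real.rpow_nonneg (sub_nonneg.2 hs.2.le) ρ) (tsum_nonneg fun n =>
    mul_nonneg (mul_nonneg (hu n) (pow_nonneg hs.1.le n)) (h0 _))

lemma abelLimit_nonneg (hu : ∀ n, 0 ≤ u n)
    (hlim : Tendsto (abelMean ρ u fun _ => 1) (𝓝[<] 1) (𝓝 L)) : 0 ≤ L := by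
  refine ge_of_tendsto hlim ?_
  filter_upwards [Ioo_mem_nhdsLT zero_lt_one] with s hs
  exact abelMean_nonneg hu hs fun _ => zero_le_one

section

variable (hu : ∀ n, 0 ≤ u n) (hsum : ∀ s ∈ Set.Ioo (0 : ℝ) 1, Summable fun n => u n * s ^ n)
  (hlim : Tendsto (abelMean ρ u fun _ => 1) (𝓝[<] 1) (𝓝 L)) (hρ : 0 < ρ)
include hu hsum hlim hρ

lemma tendsto_abelMean_polynomial (p : Polynomial ℝ) :
    Tendsto (abelMean ρ u fun y => p.eval y) (𝓝[<] 1)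
      (𝓝 (L * gammaMean ρ fun y => p.eval y)) := by
  induction p using Polynomial.induction_on' with
  | add p q hp hq =>
    simp only [Polynomial.eval_add, gammaMean_add hρ p.continuous q.continuous, mul_add]
    refine (hp.add hq).congr' ?_
    filter_upwards [Ioo_mem_nhdsLT zero_lt_one] with s hs
    exact (abelMean_add hu hs (hsum s hs) p.continuous q.continuous).symm
  | monomial k a =>
    simp only [Polynomial.eval_monomial, gammaMean_const_mul, mul_left_comm L a]
    refine ((tendsto_abelMean_pow hlim hρ k).const_mul a).congr fun s => ?_
    exact (abelMean_const_mul a).symm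

lemma eventually_abelMean_lt (hφ : Continuous φ) {C : ℝ} (hC : L * gammaMean ρ φ < C) :
    ∀ᶠ s in 𝓝[<] 1, abelMean ρ u φ s < C := by
  have hL := abelLimit_nonneg hu hlim
  obtain ⟨ε, hε, hεC⟩ : ∃ ε > 0, L * gammaMean ρ φ + L * (2 * ε) < C := by
    refine ⟨(C - L * gammaMean ρ φ) / (2 * (L + 1)), by have := sub_pos.2 hC; positivity, ?_⟩
    have : L / (L + 1) < 1 := (div_lt_one (by positivity)).2 (lt_add_one L)
    have := mul_lt_mul_of_pos_right this (sub_pos.2 hC)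
    calc _ = L * gammaMean ρ φ + L / (L + 1) * (C - L * gammaMean ρ φ) := by field_simp
      _ < C := by linarith
  obtain ⟨p, hp⟩ := exists_polynomial_near_of_continuousOn 0 1 φ hφ.continuousOn ε hε
  let q : Polynomial ℝ := p + Polynomial.C ε
  have hq (y : ℝ) : q.eval y = p.eval y + ε := by simp [q]
  have hφq (y) (hy : y ∈ Set.Icc (0 : ℝ) 1) : φ y ≤ q.eval y := by
    rw [hq]; linarith [(abs_lt.1 (hp y hy)).1]
  have hmean : gammaMean ρ (fun y => q.eval y) ≤ gammaMean ρ φ + 2 * ε := by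
    rw [← gammaMean_const hρ (2 * ε), ← gammaMean_add hρ hφ continuous_const]
    refine gammaMean_mono hρ q.continuous (hφ.add continuous_const) fun y hy => ?_
    rw [hq]; linarith [(abs_lt.1 (hp y hy)).2]
  have hqC : L * gammaMean ρ (fun y => q.eval y) < C :=
    (mul_le_mul_of_nonneg_left hmean hL).trans_lt (by rwa [mul_add])
  filter_upwards [Ioo_mem_nhdsLT zero_lt_one,
    (tendsto_abelMean_polynomial hu hsum hlim hρ q).eventually_lt_const hqC] with s hs hlt
  exact (abelMean_mono hu hs (hsum s hs) hφ q.continuous hφq).trans_lt hlt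

theorem tendsto_abelMean (hφ : Continuous φ) :
    Tendsto (abelMean ρ u φ) (𝓝[<] 1) (𝓝 (L * gammaMean ρ φ)) := by
  refine tendsto_order.2 ⟨fun C hC => ?_, fun C hC => eventually_abelMean_lt hu hsum hlim hρ hφ hC⟩
  have hneg : L * gammaMean ρ (fun y => -1 * φ y) < -C := by
    rw [gammaMean_const_mul]
    linarith
  filter_upwards [eventually_abelMean_lt hu hsum hlim hρ (hφ.const_mul (-1)) hneg] with s hs
  rw [abelMean_const_mul] at hs
  linarith

end

/-- A continuous test function, positive exactly at the points `exp (-t)` with `a < t < b`: in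
Karamata's theorem it replaces the indicator of the time window `(a, b)`. -/
noncomputable def expBump (a b y : ℝ) : ℝ :=
  max 0 (min (y - Real.exp (-b)) (Real.exp (-a) - y))

lemma continuous_expBump (a b : ℝ) : Continuous (expBump a b) := by
  unfold expBump
  fun_prop

lemma expBump_nonneg (a b y : ℝ) : 0 ≤ expBump a b y := le_max_left _ _

lemma expBump_exp_neg_pos_iff {a b t : ℝ} :
    0 < expBump a b (Real.exp (-t)) ↔ t ∈ Set.Ioo a b := by
  simp [expBump, and_comm]

lemma gammaMean_one_expBump_pos {a b : ℝ} (ha : 0 ≤ a) (hab : a < b) :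
    0 < gammaMean 1 (expBump a b) := by
  have hnonneg (t : ℝ) : 0 ≤ Real.exp (-t) * t ^ ((1 : ℝ) - 1) * expBump a b (Real.exp (-t)) := by
    rw [sub_self, Real.rpow_zero]
    exact mul_nonneg (by positivity) (expBump_nonneg a b _)
  rw [gammaMean, Real.Gamma_one, inv_one, one_mul, setIntegral_pos_iff_support_of_nonneg_ae
    (.of_forall hnonneg) (integrableOn_gammaMean one_pos (continuous_expBump a b))]
  have hvol : 0 < volume (Set.Ioo a b) := by simpa using hab
  refine hvol.trans_le (measure_mono fun t ht => ⟨?_, ha.trans_lt ht.1⟩)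
  have := expBump_exp_neg_pos_iff.2 ht
  rw [Function.mem_support, sub_self, Real.rpow_zero]
  positivity

lemma gammaMean_expBump_mem_Icc (hρ : 0 < ρ) (hρ1 : ρ ≤ 1) {a b : ℝ} (ha : 0 < a) :
    gammaMean ρ (expBump a b) ∈ Set.Icc
      (b ^ (ρ - 1) / Real.Gamma ρ * gammaMean 1 (expBump a b))
      (a ^ (ρ - 1) / Real.Gamma ρ * gammaMean 1 (expBump a b)) := by
  have hΓ := Real.Gamma_pos_of_pos hρ
  have hint {r : ℝ} (hr : 0 < r) := integrableOn_gammaMean hr (continuous_expBump a b)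
  have hbound (t : ℝ) : b ^ (ρ - 1) * (Real.exp (-t) * expBump a b (Real.exp (-t)))
        ≤ Real.exp (-t) * t ^ (ρ - 1) * expBump a b (Real.exp (-t)) ∧
      Real.exp (-t) * t ^ (ρ - 1) * expBump a b (Real.exp (-t))
        ≤ a ^ (ρ - 1) * (Real.exp (-t) * expBump a b (Real.exp (-t))) := by
    rcases (expBump_nonneg a b (Real.exp (-t))).eq_or_lt with hzero | hpos
    · simp [← hzero]
    obtain ⟨hat, htb⟩ := expBump_exp_neg_pos_iff.1 hpos
    have hφ := (mul_pos (Real.exp_pos (-t)) hpos).le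
    rw [mul_comm (Real.exp (-t)) (t ^ (ρ - 1)), mul_assoc]
    exact ⟨mul_le_mul_of_nonneg_right
        (Real.rpow_le_rpow_of_nonpos (ha.trans hat) htb.le (sub_nonpos.2 hρ1)) hφ,
      mul_le_mul_of_nonneg_right
        (Real.rpow_le_rpow_of_nonpos ha hat.le (sub_nonpos.2 hρ1)) hφ⟩
  have hint1 := hint one_pos
  simp only [gammaMean, Real.Gamma_one, inv_one, one_mul, div_eq_inv_mul, mul_assoc _⁻¹,
    sub_self, Real.rpow_zero, mul_one, ← integral_const_mul (_ ^ (ρ - 1))] at hint1 ⊢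
  exact ⟨mul_le_mul_of_nonneg_left (integral_mono (hint1.const_mul _) (hint hρ)
      fun t => (hbound t).1) (inv_nonneg.2 hΓ.le),
    mul_le_mul_of_nonneg_left (integral_mono (hint hρ) (hint1.const_mul _)
      fun t => (hbound t).2) (inv_nonneg.2 hΓ.le)⟩

/-- The scale `s = exp (-1 / N)`, at which the terms with `n ≈ t N` see the test function at
`exp (-t)`. -/
noncomputable def abelScale (N : ℕ) : ℝ := Real.exp (-(1 / (N : ℝ)))

lemma abelScale_pow (N n : ℕ) : abelScale N ^ n = Real.exp (-(n / (N : ℝ))) := by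
  rw [abelScale, ← Real.exp_nat_mul]
  ring_nf

lemma abelScale_mem_Ioo {N : ℕ} (hN : 0 < N) : abelScale N ∈ Set.Ioo (0 : ℝ) 1 :=
  ⟨Real.exp_pos _, Real.exp_lt_one_iff.2 (neg_neg_of_pos (by positivity))⟩

lemma tendsto_abelScale : Tendsto abelScale atTop (𝓝[<] 1) := by
  refine tendsto_nhdsWithin_iff.2 ⟨?_, ?_⟩
  · rw [← Real.exp_zero, ← neg_zero]
    exact (Real.continuous_exp.tendsto _).comp tendsto_one_div_atTop_nhds_zero_nat.neg
  · filter_upwards [eventually_gt_atTop 0] with N hN using (abelScale_mem_Ioo hN).2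

lemma tendsto_natCast_mul_one_sub_abelScale :
    Tendsto (fun N : ℕ => (N : ℝ) * (1 - abelScale N)) atTop (𝓝 1) := by
  have hderiv := (Real.hasDerivAt_exp 0).tendsto_slope_zero
  rw [Real.exp_zero] at hderiv
  have hscale : Tendsto (fun N : ℕ => -(1 / (N : ℝ))) atTop (𝓝[≠] 0) := by
    refine tendsto_nhdsWithin_iff.2 ⟨?_, ?_⟩
    · simpa only [neg_zero] using (tendsto_one_div_atTop_nhds_zero_nat (𝕜 := ℝ)).neg
    · filter_upwards [eventually_gt_atTop 0] with N hN
      have : (0 : ℝ) < N := Nat.cast_pos.2 hN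
      exact neg_ne_zero.2 (by positivity)
  refine (hderiv.comp hscale).congr fun N => ?_
  simp only [Function.comp_apply, abelScale, zero_add, smul_eq_mul, inv_neg, one_div, inv_inv]
  ring

lemma tendsto_abelMean_one (hφ : Continuous φ) :
    Tendsto (abelMean 1 (fun _ => 1) φ) (𝓝[<] 1) (𝓝 (gammaMean 1 φ)) := by
  have hgeom (s : ℝ) (hs : s ∈ Set.Ioo (0 : ℝ) 1) : HasSum (fun n => 1 * s ^ n) (1 - s)⁻¹ := by
    simpa using hasSum_geometric_of_lt_one hs.1.le hs.2
  have hlim : Tendsto (abelMean 1 (fun _ => 1) fun _ => 1) (𝓝[<] 1) (𝓝 1) := by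
    refine tendsto_const_nhds.congr' ?_
    filter_upwards [Ioo_mem_nhdsLT zero_lt_one] with s hs
    simp only [abelMean, mul_one, (hgeom s hs).tsum_eq, Real.rpow_one]
    exact (mul_inv_cancel₀ (sub_pos.2 hs.2).ne').symm
  simpa using tendsto_abelMean (fun _ => zero_le_one) (fun s hs => (hgeom s hs).summable) hlim
    one_pos hφ

lemma abelMean_const_left (hs : s < 1) (d : ℝ) :
    abelMean ρ (fun _ => d) φ s = d * (1 - s) ^ (ρ - 1) * abelMean 1 (fun _ => 1) φ s := by
  have hs : 0 < 1 - s := sub_pos.2 hs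
  simp only [abelMean, mul_assoc, tsum_mul_left, one_mul, Real.rpow_one]
  rw [← mul_assoc (_ ^ (ρ - 1)), ← Real.rpow_add_one hs.ne', sub_add_cancel, mul_left_comm]

lemma abelMean_mono_left {v : ℕ → ℝ} (hu : ∀ n, 0 ≤ u n) (hv : ∀ n, 0 ≤ v n)
    (hs : s ∈ Set.Ioo (0 : ℝ) 1) (husum : Summable fun n => u n * s ^ n)
    (hvsum : Summable fun n => v n * s ^ n) (hφ : Continuous φ) (h0 : ∀ y, 0 ≤ φ y)
    (h : ∀ n, 0 < φ (s ^ n) → u n ≤ v n) : abelMean ρ u φ s ≤ abelMean ρ v φ s := by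
  refine mul_le_mul_of_nonneg_left ((summable_abelMean hu hs husum hφ).tsum_le_tsum (fun n => ?_)
    (summable_abelMean hv hs hvsum hφ)) (Real.rpow_nonneg (sub_nonneg.2 hs.2.le) ρ)
  rcases (h0 (s ^ n)).eq_or_lt with hzero | hpos
  · simp [← hzero]
  · have := h n hpos
    have := pow_nonneg hs.1.le n
    gcongr

lemma summable_const_mul_pow (hs : s ∈ Set.Ioo (0 : ℝ) 1) (d : ℝ) :
    Summable fun n : ℕ => d * s ^ n :=
  (summable_geometric_of_lt_one hs.1.le hs.2).mul_left d

lemma tendsto_mul_rpow_div (L ρ r : ℝ) :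
    Tendsto (fun a : ℝ => L * (a ^ ρ / r)) (𝓝 1) (𝓝 (L / r)) := by
  have hpow := (Real.continuousAt_rpow_const 1 ρ (.inl one_ne_zero)).tendsto
  simpa only [Real.one_rpow, mul_one_div] using (hpow.div_const r).const_mul L

section

variable (hu : ∀ n, 0 ≤ u n) (hanti : Antitone u)
  (hsum : ∀ s ∈ Set.Ioo (0 : ℝ) 1, Summable fun n => u n * s ^ n)
  (hlim : Tendsto (abelMean ρ u fun _ => 1) (𝓝[<] 1) (𝓝 L)) (hρ : 0 < ρ) (hρ1 : ρ ≤ 1)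
include hu hanti hsum hlim hρ hρ1

lemma eventually_mul_one_sub_abelScale_rpow_lt {C : ℝ} (hC : L / Real.Gamma ρ < C) :
    ∀ᶠ N in atTop, u N * (1 - abelScale N) ^ (ρ - 1) < C := by
  obtain ⟨a, haC, ha0, ha1⟩ := ((((tendsto_mul_rpow_div L (ρ - 1) (Real.Gamma ρ)).mono_left
    nhdsWithin_le_nhds).eventually_lt_const hC).and (Ioo_mem_nhdsLT zero_lt_one)).exists
  have hbump := continuous_expBump a 1
  have hlt : L * gammaMean ρ (expBump a 1) < C * gammaMean 1 (expBump a 1) :=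
    calc L * gammaMean ρ (expBump a 1)
        ≤ L * (a ^ (ρ - 1) / Real.Gamma ρ * gammaMean 1 (expBump a 1)) :=
          mul_le_mul_of_nonneg_left (gammaMean_expBump_mem_Icc hρ hρ1 ha0).2
            (abelLimit_nonneg hu hlim)
      _ = L * (a ^ (ρ - 1) / Real.Gamma ρ) * gammaMean 1 (expBump a 1) := (mul_assoc _ _ _).symm
      _ < _ := mul_lt_mul_of_pos_right haC (gammaMean_one_expBump_pos ha0.le ha1)
  have hmean := (tendsto_abelMean hu hsum hlim hρ hbump).eventually_lt
    ((tendsto_abelMean_one hbump).const_mul C) hlt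
  filter_upwards [tendsto_abelScale.eventually hmean, eventually_gt_atTop 0] with N hN hN0
  have hs := abelScale_mem_Ioo hN0
  refine lt_of_mul_lt_mul_right ?_ (abelMean_nonneg (ρ := 1) (fun _ => zero_le_one) hs
    (expBump_nonneg a 1))
  rw [← abelMean_const_left hs.2]
  refine (abelMean_mono_left (fun _ => hu N) hu hs (summable_const_mul_pow hs _) (hsum _ hs) hbump
    (expBump_nonneg a 1) fun n hn => hanti ?_).trans_lt hN
  rw [abelScale_pow, expBump_exp_neg_pos_iff, Set.mem_Ioo, div_lt_one (by positivity)] at hn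
  exact_mod_cast hn.2.le

lemma eventually_lt_mul_one_sub_abelScale_rpow {C : ℝ} (hC : C < L / Real.Gamma ρ) :
    ∀ᶠ N in atTop, C < u N * (1 - abelScale N) ^ (ρ - 1) := by
  obtain ⟨b, hbC, hb1⟩ := ((((tendsto_mul_rpow_div L (ρ - 1) (Real.Gamma ρ)).mono_left
    nhdsWithin_le_nhds).eventually_const_lt hC).and (self_mem_nhdsWithin (s := Set.Ioi 1))).exists
  have hbump := continuous_expBump 1 b
  have hlt : C * gammaMean 1 (expBump 1 b) < L * gammaMean ρ (expBump 1 b) :=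
    calc C * gammaMean 1 (expBump 1 b)
        < L * (b ^ (ρ - 1) / Real.Gamma ρ) * gammaMean 1 (expBump 1 b) :=
          mul_lt_mul_of_pos_right hbC (gammaMean_one_expBump_pos zero_le_one hb1)
      _ = L * (b ^ (ρ - 1) / Real.Gamma ρ * gammaMean 1 (expBump 1 b)) := mul_assoc _ _ _
      _ ≤ _ := mul_le_mul_of_nonneg_left (gammaMean_expBump_mem_Icc hρ hρ1 one_pos).1
          (abelLimit_nonneg hu hlim)
  have hmean := ((tendsto_abelMean_one hbump).const_mul C).eventually_lt
    (tendsto_abelMean hu hsum hlim hρ hbump) hlt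
  filter_upwards [tendsto_abelScale.eventually hmean, eventually_gt_atTop 0] with N hN hN0
  have hs := abelScale_mem_Ioo hN0
  refine lt_of_mul_lt_mul_right ?_ (abelMean_nonneg (ρ := 1) (fun _ => zero_le_one) hs
    (expBump_nonneg 1 b))
  rw [← abelMean_const_left hs.2]
  refine hN.trans_le (abelMean_mono_left hu (fun _ => hu N) hs (hsum _ hs)
    (summable_const_mul_pow hs _) hbump (expBump_nonneg 1 b) fun n hn => hanti ?_)
  rw [abelScale_pow, expBump_exp_neg_pos_iff, Set.mem_Ioo, one_lt_div (by positivity)] at hn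
  exact_mod_cast hn.1.le

theorem tendsto_rpow_mul_of_tendsto_abelMean :
    Tendsto (fun n : ℕ => (n : ℝ) ^ (1 - ρ) * u n) atTop (𝓝 (L / Real.Gamma ρ)) := by
  have hscaled : Tendsto (fun N => u N * (1 - abelScale N) ^ (ρ - 1)) atTop
      (𝓝 (L / Real.Gamma ρ)) := tendsto_order.2
    ⟨fun _ => eventually_lt_mul_one_sub_abelScale_rpow hu hanti hsum hlim hρ hρ1,
      fun _ => eventually_mul_one_sub_abelScale_rpow_lt hu hanti hsum hlim hρ hρ1⟩
  have hscale := tendsto_natCast_mul_one_sub_abelScale.rpow_const (p := 1 - ρ)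
    (.inl one_ne_zero)
  have hprod := hscaled.mul hscale
  rw [Real.one_rpow, mul_one] at hprod
  refine hprod.congr' ?_
  filter_upwards [eventually_gt_atTop 0] with N hN
  have hs := sub_pos.2 (abelScale_mem_Ioo hN).2
  have hcancel : (1 - abelScale N) ^ (ρ - 1) * (1 - abelScale N) ^ (1 - ρ) = 1 := by
    rw [← Real.rpow_add hs, sub_add_sub_cancel', sub_self, Real.rpow_zero]
  rw [Real.mul_rpow N.cast_nonneg hs.le]
  linear_combination u N * (N : ℝ) ^ (1 - ρ) * hcancel

end

end Karamata

section Green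

variable {κ f g : ℤ → ℝ} {M : ℝ}

/-- The adjacency operator of `ℤ` weighted by the conductances, that is `cbar κ · P f` for the
transition operator `P` of the walk. -/
noncomputable def weightedAdj (κ f : ℤ → ℝ) (x : ℤ) : ℝ :=
  κ (x - 1) * f (x - 1) + κ x * f (x + 1)

lemma cbar_pos (hκ : ∀ x, 0 < κ x) (x : ℤ) : 0 < cbar κ x := add_pos (hκ _) (hκ _)

lemma weightedAdj_one (κ : ℤ → ℝ) : weightedAdj κ 1 = cbar κ := by
  ext x
  simp [weightedAdj, cbar]

lemma hasSum_comp_sub_one {F : ℤ → ℝ} {a : ℝ} (h : HasSum F a) :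
    HasSum (fun x => F (x - 1)) a :=
  (Equiv.subRight (1 : ℤ)).hasSum_iff.mpr h

lemma summable_mul_of_abs_le {ι : Type*} {f g : ι → ℝ} (hf : ∀ i, |f i| ≤ M) (hg : Summable g) :
    Summable fun i => f i * g i := by
  refine .of_norm_bounded (hg.abs.mul_left M) fun x => ?_
  rw [Real.norm_eq_abs, abs_mul]
  exact mul_le_mul_of_nonneg_right (hf x) (abs_nonneg _)

lemma summable_conductance_mul (hκ : ∀ x, 0 < κ x) (hf : ∀ x, |f x| ≤ M)
    (hg : Summable fun x => cbar κ x * g x) : Summable fun x => κ x * (f x * g x) := by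
  have h (x : ℤ) : |κ x / cbar κ x * f x| ≤ M := by
    have hκx := hκ (x - 1)
    rw [abs_mul, abs_of_pos (div_pos (hκ x) (cbar_pos hκ x))]
    refine (mul_le_of_le_one_left (abs_nonneg _) ?_).trans (hf x)
    rw [div_le_one (cbar_pos hκ x), cbar]
    linarith
  refine (summable_mul_of_abs_le h hg).congr fun x => ?_
  have := (cbar_pos hκ x).ne'
  field_simp

lemma summable_conductance_mul_succ (hκ : ∀ x, 0 < κ x) (hf : ∀ x, |f x| ≤ M)
    (hg : Summable fun x => cbar κ x * g x) : Summable fun x => κ x * (f x * g (x + 1)) := by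
  have h (x : ℤ) : |κ (x - 1) / cbar κ x * f (x - 1)| ≤ M := by
    have hκx := hκ x
    rw [abs_mul, abs_of_pos (div_pos (hκ _) (cbar_pos hκ x))]
    refine (mul_le_of_le_one_left (abs_nonneg _) ?_).trans (hf _)
    rw [div_le_one (cbar_pos hκ x), cbar]
    linarith
  refine ((Equiv.addRight (1 : ℤ)).summable_iff.mpr (summable_mul_of_abs_le h hg)).congr
    fun x => ?_
  have := (cbar_pos hκ (x + 1)).ne'
  simp only [Function.comp_apply, Equiv.coe_addRight, add_sub_cancel_right]
  field_simp

lemma hasSum_mul_weightedAdj (hκ : ∀ x, 0 < κ x) (hf : ∀ x, |f x| ≤ M)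
    (hg : Summable fun x => cbar κ x * g x) :
    HasSum (fun x => f x * weightedAdj κ g x)
      (∑' x, κ x * (f (x + 1) * g x) + ∑' x, κ x * (f x * g (x + 1))) := by
  refine ((hasSum_comp_sub_one (summable_conductance_mul hκ (fun x => hf (x + 1)) hg).hasSum).add
    (summable_conductance_mul_succ hκ hf hg).hasSum).congr_fun fun x => ?_
  rw [weightedAdj, sub_add_cancel]
  ring

lemma hasSum_weightedAdj_mul (hκ : ∀ x, 0 < κ x) (hf : ∀ x, |f x| ≤ M)
    (hg : Summable fun x => cbar κ x * g x) :
    HasSum (fun x => weightedAdj κ f x * g x) (∑' x, f x * weightedAdj κ g x) := by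
  rw [(hasSum_mul_weightedAdj hκ hf hg).tsum_eq]
  refine ((summable_conductance_mul hκ (fun x => hf (x + 1)) hg).hasSum.add
    (hasSum_comp_sub_one (summable_conductance_mul_succ hκ hf hg).hasSum)).congr_fun fun x => ?_
  rw [weightedAdj, sub_add_cancel]
  ring

lemma hasSum_weightedAdj (hκ : ∀ x, 0 < κ x) {a : ℝ} (hg : HasSum (fun x => cbar κ x * g x) a) :
    HasSum (weightedAdj κ g) a := by
  have hone (x : ℤ) : |(1 : ℤ → ℝ) x| ≤ 1 := by simp
  have hsum := (hasSum_mul_weightedAdj hκ hone hg.summable).summable.hasSum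
  rw [(hasSum_weightedAdj_mul hκ hone hg.summable).unique (by rwa [weightedAdj_one])] at hsum
  simpa only [Pi.one_apply, one_mul] using hsum

lemma hasSum_gradient_mul (hκ : ∀ x, 0 < κ x) (hf : ∀ x, |f x| ≤ M)
    (hg : Summable fun x => cbar κ x * g x) :
    HasSum (fun x => κ x * ((f (x + 1) - f x) * (g (x + 1) - g x)))
      (∑' x, f x * (cbar κ x * g x - weightedAdj κ g x)) := by
  have hf' (x : ℤ) : |f (x + 1)| ≤ M := hf (x + 1)
  have hdiag := (summable_conductance_mul hκ hf hg).hasSum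
  have hdiag' := (summable_conductance_mul_succ hκ hf' hg).hasSum
  have hcbar : HasSum (fun x => f x * (cbar κ x * g x))
      (∑' x, κ x * (f x * g x) + ∑' x, κ x * (f (x + 1) * g (x + 1))) := by
    refine (hdiag.add (hasSum_comp_sub_one hdiag')).congr_fun fun x => ?_
    rw [cbar, sub_add_cancel]
    ring
  have hcross := (summable_conductance_mul hκ hf' hg).hasSum.add
    (summable_conductance_mul_succ hκ hf hg).hasSum
  have hsum := hcbar.sub (hasSum_mul_weightedAdj hκ hf hg)
  simp only [← mul_sub] at hsum
  rw [hsum.tsum_eq]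
  exact ((hdiag.add hdiag').sub hcross).congr_fun fun x => by ring

end Green

section HeatKernel

variable {κ : ℤ → ℝ}

lemma heatK_zero (κ : ℤ → ℝ) (x : ℤ) : heatK κ 0 x = if x = 0 then 1 / cbar κ 0 else 0 := by
  unfold heatK walk
  split_ifs with h
  · rw [h]
  · exact zero_div _

lemma heatK_zero_zero (κ : ℤ → ℝ) : heatK κ 0 0 = 1 / cbar κ 0 := by
  rw [heatK_zero, if_pos rfl]

lemma hasSum_mul_heatK_zero (hκ : ∀ x, 0 < κ x) (f : ℤ → ℝ) :
    HasSum (fun x => f x * (cbar κ x * heatK κ 0 x)) (f 0) := by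
  convert hasSum_single (0 : ℤ) fun x hx => ?_ using 1
  · rw [heatK_zero_zero, mul_one_div_cancel (cbar_pos hκ 0).ne', mul_one]
  · rw [heatK_zero, if_neg hx, mul_zero, mul_zero]

lemma cbar_mul_heatK_succ (hκ : ∀ x, 0 < κ x) (n : ℕ) (x : ℤ) :
    cbar κ x * heatK κ (n + 1) x = weightedAdj κ (heatK κ n) x := by
  have hleft : step κ (x - 1) x = κ (x - 1) / cbar κ (x - 1) := by simp [step]
  have hright : step κ (x + 1) x = κ x / cbar κ (x + 1) := by
    rw [step, if_neg (by omega), if_pos (by omega), add_sub_cancel_right]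
  rw [heatK, mul_div_cancel₀ _ (cbar_pos hκ x).ne', walk, hleft, hright, weightedAdj, heatK, heatK]
  ring

lemma heatK_nonneg (hκ : ∀ x, 0 < κ x) (n : ℕ) (x : ℤ) : 0 ≤ heatK κ n x := by
  induction n generalizing x with
  | zero =>
    rw [heatK_zero]
    split_ifs
    · exact (one_div_pos.mpr (cbar_pos hκ 0)).le
    · exact le_rfl
  | succ n ih =>
    refine nonneg_of_mul_nonneg_right ?_ (cbar_pos hκ x)
    rw [cbar_mul_heatK_succ hκ]
    exact add_nonneg (mul_nonneg (hκ _).le (ih _)) (mul_nonneg (hκ _).le (ih _))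

lemma heatK_le (hκ : ∀ x, 0 < κ x) (n : ℕ) (x : ℤ) : heatK κ n x ≤ 1 / cbar κ 0 := by
  induction n generalizing x with
  | zero =>
    rw [heatK_zero]
    split_ifs
    · exact le_rfl
    · exact (one_div_pos.mpr (cbar_pos hκ 0)).le
  | succ n ih =>
    refine le_of_mul_le_mul_left ?_ (cbar_pos hκ x)
    calc cbar κ x * heatK κ (n + 1) x
        = κ (x - 1) * heatK κ n (x - 1) + κ x * heatK κ n (x + 1) := cbar_mul_heatK_succ hκ n x
      _ ≤ κ (x - 1) * (1 / cbar κ 0) + κ x * (1 / cbar κ 0) :=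
          add_le_add (mul_le_mul_of_nonneg_left (ih _) (hκ _).le)
            (mul_le_mul_of_nonneg_left (ih _) (hκ _).le)
      _ = cbar κ x * (1 / cbar κ 0) := (add_mul _ _ _).symm

lemma abs_heatK_le (hκ : ∀ x, 0 < κ x) (n : ℕ) (x : ℤ) : |heatK κ n x| ≤ 1 / cbar κ 0 := by
  rw [abs_of_nonneg (heatK_nonneg hκ n x)]
  exact heatK_le hκ n x

lemma heatK_eq_zero_of_not_even (hκ : ∀ x, 0 < κ x) (n : ℕ) (x : ℤ) (h : ¬Even ((n : ℤ) + x)) :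
    heatK κ n x = 0 := by
  induction n generalizing x with
  | zero => exact (heatK_zero κ x).trans (if_neg fun hx => h (by simp [hx]))
  | succ n ih =>
    have hrec := cbar_mul_heatK_succ hκ n x
    rw [Int.even_iff] at h
    push_cast at h
    rw [weightedAdj, ih (x - 1) (by rw [Int.even_iff]; omega),
      ih (x + 1) (by rw [Int.even_iff]; omega), mul_zero, mul_zero, add_zero] at hrec
    exact (mul_eq_zero.mp hrec).resolve_left (cbar_pos hκ x).ne'

lemma hasSum_cbar_mul_heatK (hκ : ∀ x, 0 < κ x) (n : ℕ) :
    HasSum (fun x => cbar κ x * heatK κ n x) 1 := by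
  induction n with
  | zero => simpa only [Pi.one_apply, one_mul] using hasSum_mul_heatK_zero hκ 1
  | succ n ih => simpa only [cbar_mul_heatK_succ hκ] using hasSum_weightedAdj hκ ih

lemma hasSum_heatK_mul_heatK (hκ : ∀ x, 0 < κ x) (a b : ℕ) :
    HasSum (fun x => heatK κ a x * (cbar κ x * heatK κ b x)) (heatK κ (a + b) 0) := by
  induction b generalizing a with
  | zero => exact hasSum_mul_heatK_zero hκ _
  | succ b ih =>
    have hb := (hasSum_cbar_mul_heatK hκ b).summable
    have hadj := hasSum_weightedAdj_mul hκ (abs_heatK_le hκ a) hb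
    have hsum := (hasSum_mul_weightedAdj hκ (abs_heatK_le hκ a) hb).summable.hasSum
    simp only [← cbar_mul_heatK_succ hκ] at hadj hsum
    rwa [← (ih (a + 1)).unique (hadj.congr_fun fun x => by ring), add_right_comm] at hsum

lemma hasSum_heatK_variance (hκ : ∀ x, 0 < κ x) (n : ℕ) :
    HasSum (fun x => κ (x - 1) * κ x / cbar κ x * (heatK κ n (x + 1) - heatK κ n (x - 1)) ^ 2)
      (heatK κ (2 * n) 0 - heatK κ (2 * (n + 1)) 0) := by
  have hsq : HasSum (fun x => cbar κ x * heatK κ n x ^ 2) (heatK κ (2 * n) 0) := by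
    rw [two_mul]
    exact (hasSum_heatK_mul_heatK hκ n n).congr_fun fun x => by ring
  rw [two_mul (n + 1)]
  refine ((hasSum_weightedAdj hκ hsq).sub (hasSum_heatK_mul_heatK hκ (n + 1) (n + 1))).congr_fun
    fun x => ?_
  have hc := (cbar_pos hκ x).ne'
  have hrec : heatK κ (n + 1) x = weightedAdj κ (heatK κ n) x / cbar κ x :=
    (eq_div_iff hc).mpr (by rw [mul_comm, cbar_mul_heatK_succ hκ])
  rw [hrec]
  simp only [weightedAdj]
  field_simp
  simp only [cbar]
  ring

lemma heatK_variance_nonneg (hκ : ∀ x, 0 < κ x) (n : ℕ) (x : ℤ) :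
    0 ≤ κ (x - 1) * κ x / cbar κ x * (heatK κ n (x + 1) - heatK κ n (x - 1)) ^ 2 :=
  mul_nonneg (div_nonneg (mul_nonneg (hκ _).le (hκ _).le) (cbar_pos hκ x).le) (sq_nonneg _)

lemma antitone_heatK_even (hκ : ∀ x, 0 < κ x) : Antitone fun n => heatK κ (2 * n) 0 :=
  antitone_nat_of_succ_le fun n =>
    sub_nonneg.mp ((hasSum_heatK_variance hκ n).nonneg (heatK_variance_nonneg hκ n))

lemma heatK_even_convex (hκ : ∀ x, 0 < κ x) (n : ℕ) :
    heatK κ (2 * (n + 1)) 0 - heatK κ (2 * (n + 2)) 0 ≤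
      heatK κ (2 * n) 0 - heatK κ (2 * (n + 1)) 0 := by
  have hsum := ((hasSum_heatK_mul_heatK hκ n n).sub
    ((hasSum_heatK_mul_heatK hκ n (n + 2)).mul_left 2)).add
      (hasSum_heatK_mul_heatK hκ (n + 2) (n + 2))
  have hsq : 0 ≤ heatK κ (n + n) 0 - 2 * heatK κ (n + (n + 2)) 0 + heatK κ (n + 2 + (n + 2)) 0 := by
    refine hsum.nonneg fun x => ?_
    have := mul_nonneg (cbar_pos hκ x).le (sq_nonneg (heatK κ n x - heatK κ (n + 2) x))
    linarith
  rw [← two_mul, ← two_mul, show n + (n + 2) = 2 * (n + 1) by ring] at hsq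
  linarith

lemma nat_mul_sub_succ_le_of_convex {u : ℕ → ℝ} (hu : ∀ n, 0 ≤ u n)
    (hconv : ∀ n, u (n + 1) - u (n + 2) ≤ u n - u (n + 1)) (n : ℕ) :
    n * (u (2 * n) - u (2 * n + 1)) ≤ u n := by
  have hanti : Antitone fun n => u n - u (n + 1) := antitone_nat_of_succ_le hconv
  have hsum (k : ℕ) (hk : k ≤ n) : k * (u (2 * n) - u (2 * n + 1)) ≤ u n - u (n + k) := by
    induction k with
    | zero => simp
    | succ k ih =>
      have := hanti (show n + k ≤ 2 * n by omega)
      push_cast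
      rw [← add_assoc]
      linarith [ih (by omega)]
  linarith [hsum n le_rfl, hu (n + n)]

lemma tendsto_sqrt_mul_heatK_sub (hκ : ∀ x, 0 < κ x) {ℓ : ℝ}
    (h : Tendsto (fun n : ℕ => √n * heatK κ (2 * n) 0) atTop (𝓝 ℓ)) (x : ℤ) :
    Tendsto (fun n : ℕ => √(2 * n) * (heatK κ (2 * n) (x + 1) - heatK κ (2 * n) (x - 1))) atTop
      (𝓝 0) := by
  have hu : Tendsto (fun n : ℕ => heatK κ (2 * n) 0) atTop (𝓝 0) := by
    refine (h.div_atTop (Real.tendsto_sqrt_atTop.comp tendsto_natCast_atTop_atTop)).congr' ?_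
    filter_upwards [eventually_gt_atTop 0] with n hn
    exact mul_div_cancel_left₀ _ (Real.sqrt_pos.mpr (Nat.cast_pos.mpr hn)).ne'
  set w := κ (x - 1) * κ x / cbar κ x
  have hw : 0 < w := div_pos (mul_pos (hκ _) (hκ _)) (cbar_pos hκ x)
  have hbound : Tendsto (fun n : ℕ => √(2 / w * heatK κ (2 * n) 0)) atTop (𝓝 0) := by
    simpa using (hu.const_mul (2 / w)).sqrt
  refine squeeze_zero_norm (fun n => Real.abs_le_sqrt ?_) hbound
  have hgrad : w * (heatK κ (2 * n) (x + 1) - heatK κ (2 * n) (x - 1)) ^ 2 ≤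
      heatK κ (2 * (2 * n)) 0 - heatK κ (2 * (2 * n + 1)) 0 :=
    le_hasSum (hasSum_heatK_variance hκ (2 * n)) x fun y _ => heatK_variance_nonneg hκ (2 * n) y
  have hincr := nat_mul_sub_succ_le_of_convex (fun n => heatK_nonneg hκ (2 * n) 0)
    (heatK_even_convex hκ) n
  rw [mul_pow, Real.sq_sqrt (by positivity), div_mul_eq_mul_div, le_div_iff₀ hw]
  linarith [mul_le_mul_of_nonneg_left hgrad (Nat.cast_nonneg (α := ℝ) n)]

lemma tendsto_sqrt_mul_heatK (hκ : ∀ x, 0 < κ x) {ℓ : ℝ}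
    (h : Tendsto (fun n : ℕ => √n * heatK κ (2 * n) 0) atTop (𝓝 ℓ)) {x : ℤ} (hx : Even x) :
    Tendsto (fun n : ℕ => √(2 * n) * heatK κ (2 * n) x) atTop (𝓝 (√2 * ℓ)) := by
  obtain ⟨k, rfl⟩ := hx
  induction k using Int.induction_on with
  | zero =>
    refine (h.const_mul √2).congr fun n => ?_
    rw [Real.sqrt_mul zero_le_two, mul_assoc, add_zero]
  | succ k ih =>
    have hstep := ih.add (tendsto_sqrt_mul_heatK_sub hκ h ((k : ℤ) + k + 1))
    rw [add_zero] at hstep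
    refine hstep.congr fun n => ?_
    rw [add_sub_cancel_right, show (k : ℤ) + k + 1 + 1 = k + 1 + (k + 1) by ring]
    ring
  | pred k ih =>
    have hstep := ih.sub (tendsto_sqrt_mul_heatK_sub hκ h (-(k : ℤ) + -k - 1))
    rw [sub_zero] at hstep
    refine hstep.congr fun n => ?_
    rw [sub_add_cancel, show -(k : ℤ) + -k - 1 - 1 = -k - 1 + (-k - 1) by ring]
    ring

end HeatKernel

section Resolvent

variable {κ : ℤ → ℝ} {z : ℝ}

/-- The resolvent `g_z(x) = ∑ₙ zⁿ hₙ(x)` of the walk, which is the generating function of the heat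
kernel. -/
noncomputable def walkResolvent (κ : ℤ → ℝ) (z : ℝ) (x : ℤ) : ℝ := ∑' n : ℕ, z ^ n * heatK κ n x

lemma hasSum_walkResolvent (hκ : ∀ x, 0 < κ x) (hz0 : 0 ≤ z) (hz1 : z < 1) (x : ℤ) :
    HasSum (fun n : ℕ => z ^ n * heatK κ n x) (walkResolvent κ z x) := by
  refine Summable.hasSum ?_
  simpa only [mul_comm] using summable_mul_of_abs_le (f := fun n => heatK κ n x)
    (fun n => abs_heatK_le hκ n x) (summable_geometric_of_lt_one hz0 hz1)

lemma walkResolvent_nonneg (hκ : ∀ x, 0 < κ x) (hz0 : 0 ≤ z) (x : ℤ) :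
    0 ≤ walkResolvent κ z x :=
  tsum_nonneg (L := .unconditional ℕ) fun n => mul_nonneg (pow_nonneg hz0 n) (heatK_nonneg hκ n x)

lemma abs_walkResolvent_le (hκ : ∀ x, 0 < κ x) (hz0 : 0 ≤ z) (hz1 : z < 1) (x : ℤ) :
    |walkResolvent κ z x| ≤ (1 - z)⁻¹ * (1 / cbar κ 0) := by
  rw [abs_of_nonneg (walkResolvent_nonneg hκ hz0 x)]
  exact hasSum_le (fun n => mul_le_mul_of_nonneg_left (heatK_le hκ n x) (pow_nonneg hz0 n))
    (hasSum_walkResolvent hκ hz0 hz1 x) ((hasSum_geometric_of_lt_one hz0 hz1).mul_right _)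

lemma walkResolvent_equation (hκ : ∀ x, 0 < κ x) (hz0 : 0 ≤ z) (hz1 : z < 1) (x : ℤ) :
    cbar κ x * walkResolvent κ z x - z * weightedAdj κ (walkResolvent κ z) x =
      cbar κ x * heatK κ 0 x := by
  have hsum := hasSum_walkResolvent hκ hz0 hz1
  have hadj : HasSum (fun n => z ^ (n + 1) * (cbar κ x * heatK κ (n + 1) x))
      (z * weightedAdj κ (walkResolvent κ z) x) := by
    refine ((((hsum (x - 1)).mul_left (κ (x - 1))).add ((hsum (x + 1)).mul_left (κ x))).mul_left
      z).congr_fun fun n => ?_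
    rw [cbar_mul_heatK_succ hκ, weightedAdj]
    ring
  have hzero := (hasSum_nat_add_iff' (f := fun n => z ^ n * (cbar κ x * heatK κ n x)) 1).mpr
    (((hsum x).mul_left (cbar κ x)).congr_fun fun n => by ring)
  rw [Finset.sum_range_one, pow_zero, one_mul] at hzero
  linarith [hadj.unique hzero]

lemma summable_cbar_mul_walkResolvent (hκ : ∀ x, 0 < κ x) (hz0 : 0 ≤ z) (hz1 : z < 1) :
    Summable fun x => cbar κ x * walkResolvent κ z x := by
  refine summable_of_sum_le (c := (1 - z)⁻¹)
    (fun x => mul_nonneg (cbar_pos hκ x).le (walkResolvent_nonneg hκ hz0 x)) fun s => ?_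
  refine hasSum_le (fun n => ?_)
    (hasSum_sum fun x _ => (hasSum_walkResolvent hκ hz0 hz1 x).mul_left (cbar κ x))
    (hasSum_geometric_of_lt_one hz0 hz1)
  have hmass : ∑ x ∈ s, cbar κ x * heatK κ n x ≤ 1 :=
    sum_le_hasSum s (fun x _ => mul_nonneg (cbar_pos hκ x).le (heatK_nonneg hκ n x))
      (hasSum_cbar_mul_heatK hκ n)
  calc ∑ x ∈ s, cbar κ x * (z ^ n * heatK κ n x)
      = z ^ n * ∑ x ∈ s, cbar κ x * heatK κ n x := by
        rw [Finset.mul_sum]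
        exact Finset.sum_congr rfl fun x _ => by ring
    _ ≤ z ^ n := mul_le_of_le_one_right (pow_nonneg hz0 n) hmass

lemma hasSum_heatK_even_mul_pow (hκ : ∀ x, 0 < κ x) (hz0 : 0 ≤ z) (hz1 : z < 1) :
    HasSum (fun n : ℕ => heatK κ (2 * n) 0 * (z ^ 2) ^ n) (walkResolvent κ z 0) := by
  have hodd (n : ℕ) (hn : n ∉ Set.range fun m : ℕ => 2 * m) : z ^ n * heatK κ n 0 = 0 := by
    refine mul_eq_zero_of_right _ (heatK_eq_zero_of_not_even hκ n 0 fun h => hn ?_)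
    rw [add_zero, Int.even_coe_nat] at h
    obtain ⟨m, rfl⟩ := h.two_dvd
    exact ⟨m, rfl⟩
  have hinj : Function.Injective fun m : ℕ => 2 * m := mul_right_injective₀ two_ne_zero
  refine ((hinj.hasSum_iff hodd).mpr (hasSum_walkResolvent hκ hz0 hz1 0)).congr_fun fun n => ?_
  rw [Function.comp_apply, pow_mul, mul_comm]

lemma hasSum_walkResolvent_green (hκ : ∀ x, 0 < κ x) (hz0 : 0 ≤ z) (hz1 : z < 1)
    {f : ℤ → ℝ} {M : ℝ} (hf : ∀ x, |f x| ≤ M) :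
    HasSum (fun x =>
      z * (κ x * ((f (x + 1) - f x) * (walkResolvent κ z (x + 1) - walkResolvent κ z x))) +
      (1 - z) * (cbar κ x * (f x * walkResolvent κ z x))) (f 0) := by
  have hg := summable_cbar_mul_walkResolvent hκ hz0 hz1
  have hfg := summable_mul_of_abs_le hf hg
  have hlap : Summable fun x =>
      f x * (cbar κ x * walkResolvent κ z x - weightedAdj κ (walkResolvent κ z) x) := by
    simpa only [mul_sub] using hfg.sub (hasSum_mul_weightedAdj hκ hf hg).summable
  have hvalue := ((hlap.hasSum.mul_left z).add (hfg.hasSum.mul_left (1 - z))).unique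
    ((hasSum_mul_heatK_zero hκ f).congr_fun fun x => by
      rw [← walkResolvent_equation hκ hz0 hz1]
      ring)
  rw [← hvalue]
  exact (((hasSum_gradient_mul hκ hf hg).mul_left z).add (hfg.hasSum.mul_left (1 - z))).congr_fun
    fun x => by ring

lemma hasSum_walkResolvent_energy (hκ : ∀ x, 0 < κ x) (hz0 : 0 ≤ z) (hz1 : z < 1) :
    HasSum (fun x => z * (κ x * (walkResolvent κ z (x + 1) - walkResolvent κ z x) ^ 2) +
      (1 - z) * (cbar κ x * walkResolvent κ z x ^ 2)) (walkResolvent κ z 0) := by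
  simpa only [pow_two] using hasSum_walkResolvent_green hκ hz0 hz1 (abs_walkResolvent_le hκ hz0 hz1)

lemma summable_mul_of_sq_div {a b w : ℤ → ℝ} (hw : ∀ x, 0 < w x)
    (ha : Summable fun x => a x ^ 2 / w x) (hb : Summable fun x => w x * b x ^ 2) :
    Summable fun x => a x * b x := by
  refine .of_norm_bounded (ha.add hb) fun x => ?_
  have hamgm := two_mul_le_add_sq (|a x| / √(w x)) (√(w x) * |b x|)
  have hsq : √(w x) ≠ 0 := (Real.sqrt_pos.mpr (hw x)).ne'
  rw [div_pow, mul_pow, sq_abs, sq_abs, Real.sq_sqrt (hw x).le,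
    show 2 * (|a x| / √(w x)) * (√(w x) * |b x|) = 2 * |a x * b x| by
      rw [abs_mul]; field_simp] at hamgm
  rw [Real.norm_eq_abs]
  linarith [abs_nonneg (a x * b x)]

theorem dirichlet_principle (hκ : ∀ x, 0 < κ x) (hz0 : 0 ≤ z) (hz1 : z < 1) {f : ℤ → ℝ}
    {M E V : ℝ} (hf : ∀ x, |f x| ≤ M) (hf0 : f 0 = 1)
    (hE : HasSum (fun x => κ x * (f (x + 1) - f x) ^ 2) E)
    (hV : HasSum (fun x => cbar κ x * f x ^ 2) V) :
    1 ≤ (z * E + (1 - z) * V) * walkResolvent κ z 0 := by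
  have hdiscrim := discrim_le_zero (a := walkResolvent κ z 0) (b := -2) (c := z * E + (1 - z) * V)
    fun t => ?_
  · rw [discrim] at hdiscrim
    linarith
  have hquad := (((hasSum_walkResolvent_energy hκ hz0 hz1).mul_left (t * t)).sub
    ((hasSum_walkResolvent_green hκ hz0 hz1 hf).mul_left (2 * t))).add
      ((hE.mul_left z).add (hV.mul_left (1 - z)))
  have hnonneg := hquad.nonneg fun x => ?_
  · rw [hf0] at hnonneg
    linarith
  have hgrad := mul_nonneg (mul_nonneg hz0 (hκ x).le)
    (sq_nonneg (f (x + 1) - f x - t * (walkResolvent κ z (x + 1) - walkResolvent κ z x)))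
  have hmass := mul_nonneg (mul_nonneg (sub_nonneg.mpr hz1.le) (cbar_pos hκ x).le)
    (sq_nonneg (f x - t * walkResolvent κ z x))
  linarith

lemma hasSum_mul_divergence {θ k g : ℤ → ℝ}
    (hdiv : ∀ x, k x = (if x = 0 then 1 else 0) - θ x + θ (x - 1))
    (hθg : Summable fun x => θ x * g (x + 1)) :
    HasSum (fun x => k x * g x - θ x * (g (x + 1) - g x)) (g 0) := by
  have hshift := (hasSum_comp_sub_one hθg.hasSum).sub hθg.hasSum
  have hsum := (hasSum_ite_eq (0 : ℤ) (g 0)).add hshift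
  rw [sub_self, add_zero] at hsum
  refine hsum.congr_fun fun x => ?_
  rw [hdiv, sub_add_cancel]
  split_ifs with hx
  · rw [hx]; ring
  · ring

theorem thomson_principle (hκ : ∀ x, 0 < κ x) (hz0 : 0 < z) (hz1 : z < 1) {θ k : ℤ → ℝ} {E V : ℝ}
    (hdiv : ∀ x, k x = (if x = 0 then 1 else 0) - θ x + θ (x - 1))
    (hE : HasSum (fun x => θ x ^ 2 / κ x) E) (hV : HasSum (fun x => k x ^ 2 / cbar κ x) V) :
    walkResolvent κ z 0 ≤ E / z + V / (1 - z) := by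
  set g := walkResolvent κ z
  have hgb := abs_walkResolvent_le hκ hz0.le hz1
  have hg := summable_cbar_mul_walkResolvent hκ hz0.le hz1
  have hθg : Summable fun x => θ x * g (x + 1) :=
    summable_mul_of_sq_div hκ hE.summable
      ((summable_conductance_mul_succ hκ (fun x => hgb (x + 1)) hg).congr fun x => by ring)
  have hquad := (((hE.div_const z).add (hV.div_const (1 - z))).add
    (hasSum_walkResolvent_energy hκ hz0.le hz1)).sub
      ((hasSum_mul_divergence hdiv hθg).mul_left 2)
  have hnonneg := hquad.nonneg fun x => ?_
  · linarith
  have hzκ := mul_pos hz0 (hκ x)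
  have hzc := mul_pos (sub_pos.mpr hz1) (cbar_pos hκ x)
  have hflow := div_nonneg (sq_nonneg (θ x + z * κ x * (g (x + 1) - g x))) hzκ.le
  have hmass := div_nonneg (sq_nonneg (k x - (1 - z) * cbar κ x * g x)) hzc.le
  refine (add_nonneg hflow hmass).trans_eq ?_
  have := sub_pos.mpr hz1
  have := hκ x
  have := cbar_pos hκ x
  field_simp
  ring

end Resolvent

/-- `f : ℤ → ℝ` has mean `a` if its averages over `{0, …, n - 1}` and over `{-n, …, -1}` both tend
to `a`; this is all that the deterministic part of the argument uses of the environment. -/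
def HasMean (f : ℤ → ℝ) (a : ℝ) : Prop :=
  Tendsto (fun n : ℕ => (∑ k ∈ Finset.range n, f k) / n) atTop (𝓝 a) ∧
    Tendsto (fun n : ℕ => (∑ k ∈ Finset.range n, f (-((k : ℤ) + 1))) / n) atTop (𝓝 a)

lemma exists_le_mul_add_of_tendsto_div {A B : ℕ → ℝ} {a b t : ℝ}
    (hA : Tendsto (fun n => A n / n) atTop (𝓝 a)) (hB : Tendsto (fun n => B n / n) atTop (𝓝 b))
    (h : a < t * b) : ∃ C, ∀ n, A (n + 1) ≤ t * B n + C := by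
  have hlim : Tendsto (fun n : ℕ => A (n + 1) / ((n + 1 : ℕ) : ℝ)
      - t * (B n / n * (n / (n + 1 : ℝ)))) atTop (𝓝 (a - t * (b * 1))) :=
    (hA.comp (tendsto_add_atTop_nat 1)).sub
      ((hB.mul (tendsto_natCast_div_add_atTop 1)).const_mul t)
  have hle : ∀ᶠ n in atTop, A (n + 1) - t * B n ≤ 0 := by
    filter_upwards [hlim.eventually_lt_const (show a - t * (b * 1) < 0 by linarith),
      eventually_gt_atTop 0] with n hn hn0
    have hn0' : (0 : ℝ) < n := Nat.cast_pos.mpr hn0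
    have heq : A (n + 1) / ((n + 1 : ℕ) : ℝ) - t * (B n / n * (n / (n + 1 : ℝ)))
        = (A (n + 1) - t * B n) / (n + 1) := by
      push_cast
      field_simp
    rw [heq, div_neg_iff] at hn
    rcases hn with hn | hn <;> linarith
  obtain ⟨C, hC⟩ := (isBoundedUnder_of_eventually_le hle).bddAbove_range
  exact ⟨C, fun n => by linarith [hC ⟨n, rfl⟩]⟩

section HalfLine

lemma two_mul_one_sub_exp_neg_le {y : ℝ} (hy : 0 ≤ y) :
    2 * (1 - Real.exp (-y)) ≤ y * (1 + Real.exp (-y)) := by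
  let gap : ℝ → ℝ := fun y => y * (1 + Real.exp (-y)) - 2 * (1 - Real.exp (-y))
  have hderiv (y : ℝ) : HasDerivAt gap (1 - (1 + y) * Real.exp (-y)) y := by
    have hexp : HasDerivAt (fun y : ℝ => Real.exp (-y)) (-Real.exp (-y)) y := by
      simpa using (hasDerivAt_neg y).exp
    refine (((hasDerivAt_id y).mul (hexp.const_add 1)).sub
      ((hexp.const_sub 1).const_mul 2)).congr_deriv ?_
    simp only [id]
    ring
  have hmono : MonotoneOn gap (Set.Ici 0) := by
    refine monotoneOn_of_deriv_nonneg (convex_Ici 0)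
      (fun y _ => (hderiv y).continuousAt.continuousWithinAt)
      (fun y _ => (hderiv y).differentiableAt.differentiableWithinAt) fun y _ => ?_
    rw [(hderiv y).deriv, sub_nonneg, Real.exp_neg, ← div_eq_mul_inv, div_le_one (Real.exp_pos y)]
    linarith [Real.add_one_le_exp y]
  have hgap : gap 0 ≤ gap y := hmono Set.self_mem_Ici hy hy
  simp only [gap, neg_zero, Real.exp_zero, sub_self, zero_mul, mul_zero, sub_nonneg] at hgap
  exact hgap

lemma sq_exp_neg_sub_exp_neg_le {p q : ℝ} (h : p ≤ q) :
    (Real.exp (-p) - Real.exp (-q)) ^ 2 ≤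
      (q - p) / 2 * (Real.exp (-p) ^ 2 - Real.exp (-q) ^ 2) := by
  have hq : Real.exp (-q) = Real.exp (-p) * Real.exp (-(q - p)) := by
    rw [← Real.exp_add]
    ring_nf
  have hle : Real.exp (-(q - p)) ≤ 1 := Real.exp_le_one_iff.2 (by linarith)
  have hgap := mul_le_mul_of_nonneg_left (two_mul_one_sub_exp_neg_le (sub_nonneg.2 h))
    (mul_nonneg (sq_nonneg (Real.exp (-p))) (sub_nonneg.2 hle))
  rw [hq]
  linarith

/-- The profile `exp (-α (r 0 + ⋯ + r (n - 1)))`, from which the trial potential and the trial flow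
are built on each half-line. -/
noncomputable def expDecay (r : ℕ → ℝ) (α : ℝ) (n : ℕ) : ℝ :=
  Real.exp (-(α * ∑ k ∈ Finset.range n, r k))

variable {r m : ℕ → ℝ} {α t C : ℝ}

lemma expDecay_zero (r : ℕ → ℝ) (α : ℝ) : expDecay r α 0 = 1 := by simp [expDecay]

lemma expDecay_pos (r : ℕ → ℝ) (α : ℝ) (n : ℕ) : 0 < expDecay r α n := Real.exp_pos _

lemma expDecay_succ (r : ℕ → ℝ) (α : ℝ) (n : ℕ) :
    expDecay r α (n + 1) = expDecay r α n * Real.exp (-(α * r n)) := by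
  rw [expDecay, expDecay, Finset.sum_range_succ, ← Real.exp_add]
  ring_nf

lemma antitone_expDecay (hr : ∀ n, 0 ≤ r n) (hα : 0 ≤ α) : Antitone (expDecay r α) :=
  antitone_nat_of_succ_le fun n => by
    rw [expDecay_succ]
    exact mul_le_of_le_one_right (expDecay_pos r α n).le
      (Real.exp_le_one_iff.2 (neg_nonpos.2 (mul_nonneg hα (hr n))))

lemma expDecay_le_one (hr : ∀ n, 0 ≤ r n) (hα : 0 ≤ α) (n : ℕ) : expDecay r α n ≤ 1 :=
  (antitone_expDecay hr hα n.zero_le).trans_eq (expDecay_zero r α)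

lemma expDecay_sq (r : ℕ → ℝ) (α : ℝ) (n : ℕ) : expDecay r α n ^ 2 = expDecay r (2 * α) n := by
  rw [expDecay, expDecay, ← Real.exp_nat_mul]
  push_cast
  ring_nf

lemma mul_expDecay_succ_le (r : ℕ → ℝ) (α : ℝ) (n : ℕ) :
    α * r n * expDecay r α (n + 1) ≤ expDecay r α n - expDecay r α (n + 1) := by
  have hexp : expDecay r α n = expDecay r α (n + 1) * Real.exp (α * r n) := by
    rw [expDecay_succ, mul_assoc, ← Real.exp_add, neg_add_cancel, Real.exp_zero, mul_one]
  have hle := mul_le_mul_of_nonneg_left (Real.add_one_le_exp (α * r n))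
    (expDecay_pos r α (n + 1)).le
  linarith

lemma expDecay_energy_le (hr : ∀ n, 0 < r n) (hα : 0 ≤ α) :
    (Summable fun n => (expDecay r α n - expDecay r α (n + 1)) ^ 2 / r n) ∧
      ∑' n, (expDecay r α n - expDecay r α (n + 1)) ^ 2 / r n ≤ α / 2 := by
  have hnonneg (n : ℕ) : 0 ≤ (expDecay r α n - expDecay r α (n + 1)) ^ 2 / r n :=
    div_nonneg (sq_nonneg _) (hr n).le
  have hterm (n : ℕ) : (expDecay r α n - expDecay r α (n + 1)) ^ 2 / r n ≤
      α / 2 * (expDecay r α n ^ 2 - expDecay r α (n + 1) ^ 2) := by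
    have hgap : α * ∑ k ∈ Finset.range (n + 1), r k - α * ∑ k ∈ Finset.range n, r k = α * r n := by
      rw [Finset.sum_range_succ]
      ring
    have hsq := sq_exp_neg_sub_exp_neg_le (sub_nonneg.1 (hgap ▸ mul_nonneg hα (hr n).le))
    rw [hgap] at hsq
    rw [div_le_iff₀ (hr n)]
    exact hsq.trans_eq (by rw [expDecay, expDecay]; ring)
  have hsum (N : ℕ) :
      ∑ n ∈ Finset.range N, (expDecay r α n - expDecay r α (n + 1)) ^ 2 / r n ≤ α / 2 := by
    refine (Finset.sum_le_sum fun n _ => hterm n).trans ?_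
    rw [← Finset.mul_sum, Finset.sum_range_sub', expDecay_zero]
    exact mul_le_of_le_one_right (by positivity) (by linarith [sq_nonneg (expDecay r α N)])
  exact ⟨summable_of_sum_range_le hnonneg hsum, Real.tsum_le_of_sum_range_le hnonneg hsum⟩

lemma sum_mul_expDecay_le (hr : ∀ n, 0 ≤ r n) (hα : 0 ≤ α) (ht : 0 ≤ t)
    (h : ∀ n, ∑ k ∈ Finset.range (n + 1), m k ≤ t * ∑ k ∈ Finset.range n, r k + C) (n : ℕ) :
    α * ∑ k ∈ Finset.range (n + 1), m k * expDecay r α k ≤ t + α * C := by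
  -- Summation by parts: the unused part of the bound on the mass, discounted, is kept on the left.
  have hparts : α * (∑ k ∈ Finset.range (n + 1), m k * expDecay r α k +
      (t * ∑ k ∈ Finset.range n, r k + C - ∑ k ∈ Finset.range (n + 1), m k) * expDecay r α n) ≤
      t * (1 - expDecay r α n) + α * C := by
    induction n with
    | zero => simp [expDecay_zero]
    | succ n ih =>
      have hstep := mul_le_mul_of_nonneg_left (mul_expDecay_succ_le r α n) ht
      have hslack := mul_nonneg (mul_nonneg hα (sub_nonneg.2 (h n)))
        (sub_nonneg.2 (antitone_expDecay hr hα n.le_succ))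
      rw [Finset.sum_range_succ _ (n + 1), Finset.sum_range_succ r, Finset.sum_range_succ m (n + 1)]
      linarith
  have hslack := mul_nonneg (mul_nonneg hα (sub_nonneg.2 (h n))) (expDecay_pos r α n).le
  linarith [mul_nonneg ht (expDecay_pos r α n).le]

lemma expDecay_mass_le (hr : ∀ n, 0 ≤ r n) (hm : ∀ n, 0 ≤ m n) (hα : 0 < α) (ht : 0 ≤ t)
    (h : ∀ n, ∑ k ∈ Finset.range (n + 1), m k ≤ t * ∑ k ∈ Finset.range n, r k + C) :
    (Summable fun n => m n * expDecay r α n ^ 2) ∧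
      ∑' n, m n * expDecay r α n ^ 2 ≤ t / (2 * α) + C := by
  have hnonneg (n : ℕ) : 0 ≤ m n * expDecay r α n ^ 2 := mul_nonneg (hm n) (sq_nonneg _)
  have hsum (n : ℕ) : ∑ k ∈ Finset.range n, m k * expDecay r α k ^ 2 ≤ t / (2 * α) + C := by
    refine (Finset.sum_le_sum_of_subset_of_nonneg (Finset.range_subset_range.2 n.le_succ)
      fun k _ _ => hnonneg k).trans ?_
    rw [div_add' _ _ _ (by positivity), le_div_iff₀ (by positivity)]
    simpa only [expDecay_sq, mul_comm] using
      sum_mul_expDecay_le hr (mul_nonneg zero_le_two hα.le) ht h n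
  exact ⟨summable_of_sum_range_le hnonneg hsum, Real.tsum_le_of_sum_range_le hnonneg hsum⟩

end HalfLine

section TrialFunctions

/-- The function on `ℤ` with value `p n` at `n` and `q n` at `-(n + 1)`. -/
def glueHalfLines {α : Type*} (p q : ℕ → α) : ℤ → α
  | .ofNat n => p n
  | .negSucc n => q n

lemma glueHalfLines_natCast {α : Type*} (p q : ℕ → α) (n : ℕ) : glueHalfLines p q n = p n := rfl

lemma glueHalfLines_neg {α : Type*} (p q : ℕ → α) (n : ℕ) :
    glueHalfLines p q (-((n : ℤ) + 1)) = q n := by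
  rw [← Int.negSucc_eq]
  rfl

lemma exists_hasSum_le_of_halfLines {F : ℤ → ℝ} {p q : ℕ → ℝ} {a b : ℝ} (hF : ∀ x, 0 ≤ F x)
    (hp : ∀ n : ℕ, F n ≤ p n) (hq : ∀ n : ℕ, F (-((n : ℤ) + 1)) ≤ q n)
    (ha : Summable p ∧ ∑' n, p n ≤ a) (hb : Summable q ∧ ∑' n, q n ≤ b) :
    ∃ s ≤ a + b, HasSum F s := by
  have hFp : Summable fun n : ℕ => F n := ha.1.of_nonneg_of_le (fun _ => hF _) hp
  have hFq : Summable fun n : ℕ => F (-((n : ℤ) + 1)) := hb.1.of_nonneg_of_le (fun _ => hF _) hq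
  exact ⟨_, add_le_add ((hFp.tsum_le_tsum hp ha.1).trans ha.2)
    ((hFq.tsum_le_tsum hq hb.1).trans hb.2), hFp.hasSum.of_nat_of_neg_add_one hFq.hasSum⟩

variable {κ : ℤ → ℝ} {α β t C B m : ℝ}

/-- The trial potential `exp (-α ρ(x))`, where `ρ(x)` is the resistance between `0` and `x`. -/
noncomputable def trialPotential (κ : ℤ → ℝ) (α : ℝ) : ℤ → ℝ :=
  glueHalfLines (expDecay (fun n => 1 / κ n) α)
    fun n => expDecay (fun n => 1 / κ (-((n : ℤ) + 1))) α (n + 1)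

lemma trialPotential_natCast (κ : ℤ → ℝ) (α : ℝ) (n : ℕ) :
    trialPotential κ α n = expDecay (fun n => 1 / κ n) α n :=
  glueHalfLines_natCast _ _ n

lemma trialPotential_neg (κ : ℤ → ℝ) (α : ℝ) (n : ℕ) :
    trialPotential κ α (-((n : ℤ) + 1)) =
      expDecay (fun n => 1 / κ (-((n : ℤ) + 1))) α (n + 1) :=
  glueHalfLines_neg _ _ n

lemma trialPotential_zero (κ : ℤ → ℝ) (α : ℝ) : trialPotential κ α 0 = 1 :=
  (trialPotential_natCast κ α 0).trans (expDecay_zero _ _)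

lemma trialPotential_neg_add_one (κ : ℤ → ℝ) (α : ℝ) : ∀ n : ℕ,
    trialPotential κ α (-((n : ℤ) + 1) + 1) = expDecay (fun n => 1 / κ (-((n : ℤ) + 1))) α n
  | 0 => (trialPotential_zero κ α).trans (expDecay_zero _ _).symm
  | n + 1 => by rw [← trialPotential_neg, neg_add, neg_add_cancel_right, Nat.cast_succ]

lemma abs_trialPotential_le_one (hκ : ∀ x, 0 < κ x) (hα : 0 ≤ α) (x : ℤ) :
    |trialPotential κ α x| ≤ 1 := by
  have hr (x : ℤ) : 0 ≤ 1 / κ x := (one_div_pos.2 (hκ x)).le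
  rcases x with n | n
  · exact (abs_of_pos (expDecay_pos _ _ _)).trans_le (expDecay_le_one (fun _ => hr _) hα _)
  · exact (abs_of_pos (expDecay_pos _ _ _)).trans_le (expDecay_le_one (fun _ => hr _) hα _)

lemma exists_hasSum_trialPotential_energy (hκ : ∀ x, 0 < κ x) (hα : 0 ≤ α) :
    ∃ E ≤ α, HasSum (fun x => κ x * (trialPotential κ α (x + 1) - trialPotential κ α x) ^ 2) E := by
  have hr (x : ℤ) : 0 < 1 / κ x := one_div_pos.2 (hκ x)
  suffices ∃ E ≤ α / 2 + α / 2,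
      HasSum (fun x => κ x * (trialPotential κ α (x + 1) - trialPotential κ α x) ^ 2) E by
    rwa [add_halves] at this
  refine exists_hasSum_le_of_halfLines (fun x => mul_nonneg (hκ x).le (sq_nonneg _))
    (fun n => ?_) (fun n => ?_) (expDecay_energy_le (fun n : ℕ => hr n) hα)
    (expDecay_energy_le (fun n : ℕ => hr (-((n : ℤ) + 1))) hα)
  · have hsucc := trialPotential_natCast κ α (n + 1)
    rw [Nat.cast_succ] at hsucc
    rw [trialPotential_natCast, hsucc, div_div_eq_mul_div, div_one, mul_comm, sub_sq_comm]
  · rw [trialPotential_neg, trialPotential_neg_add_one, div_div_eq_mul_div, div_one, mul_comm]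

lemma exists_hasSum_trialPotential_mass (hκ : ∀ x, 0 < κ x) (hα : 0 < α) (ht : 0 ≤ t)
    (h : ∀ n : ℕ, ∑ k ∈ Finset.range (n + 1), cbar κ k ≤
      t * ∑ k ∈ Finset.range n, 1 / κ k + C)
    (h' : ∀ n : ℕ, ∑ k ∈ Finset.range (n + 1), cbar κ (-((k : ℤ) + 1)) ≤
      t * ∑ k ∈ Finset.range n, 1 / κ (-((k : ℤ) + 1)) + C) :
    ∃ V ≤ t / α + 2 * C, HasSum (fun x => cbar κ x * trialPotential κ α x ^ 2) V := by
  have hr (x : ℤ) : 0 ≤ 1 / κ x := (one_div_pos.2 (hκ x)).le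
  have hc (x : ℤ) : 0 ≤ cbar κ x := (cbar_pos hκ x).le
  have hbound : t / α + 2 * C = t / (2 * α) + C + (t / (2 * α) + C) := by
    field_simp
    ring
  rw [hbound]
  refine exists_hasSum_le_of_halfLines (fun x => mul_nonneg (hc x) (sq_nonneg _))
    (fun n => ?_) (fun n => ?_) (expDecay_mass_le (fun _ => hr _) (fun _ => hc _) hα ht h)
    (expDecay_mass_le (fun _ => hr _) (fun _ => hc _) hα ht h')
  · rw [trialPotential_natCast]
  · rw [trialPotential_neg]
    exact mul_le_mul_of_nonneg_left (pow_le_pow_left₀ (expDecay_pos _ _ _).le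
      (antitone_expDecay (fun _ => hr _) hα.le n.le_succ) 2) (hc _)

lemma exists_one_le_mul_walkResolvent (hκ : ∀ x, 0 < κ x) (hB : HasMean (fun x => 1 / κ x) B)
    (hm : HasMean (cbar κ) m) (ht : 0 ≤ t) (hmB : m < t * B) :
    ∃ C, ∀ α > 0, ∀ z, 0 ≤ z → z < 1 →
      1 ≤ (α + (1 - z) * (t / α + C)) * walkResolvent κ z 0 := by
  obtain ⟨C₁, hC₁⟩ := exists_le_mul_add_of_tendsto_div hm.1 hB.1 hmB
  obtain ⟨C₂, hC₂⟩ := exists_le_mul_add_of_tendsto_div hm.2 hB.2 hmB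
  refine ⟨2 * max C₁ C₂, fun α hα z hz0 hz1 => ?_⟩
  obtain ⟨E, hE_le, hE⟩ := exists_hasSum_trialPotential_energy hκ hα.le
  obtain ⟨V, hV_le, hV⟩ := exists_hasSum_trialPotential_mass hκ hα ht
    (fun n => (hC₁ n).trans (add_le_add_right (le_max_left _ _) _))
    (fun n => (hC₂ n).trans (add_le_add_right (le_max_right _ _) _))
  have hE_nonneg : 0 ≤ E := hE.nonneg fun x => mul_nonneg (hκ x).le (sq_nonneg _)
  refine (dirichlet_principle hκ hz0 hz1 (abs_trialPotential_le_one hκ hα.le)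
    (trialPotential_zero κ α) hE hV).trans
    (mul_le_mul_of_nonneg_right (add_le_add ?_ ?_) (walkResolvent_nonneg hκ hz0 0))
  · exact (mul_le_of_le_one_left hE_nonneg hz1.le).trans hE_le
  · exact mul_le_mul_of_nonneg_left hV_le (by linarith)

/-- The trial flow sending one half of a unit of current from `0` in each direction and losing at
each vertex `x ≠ 0` the fraction `1 - exp (-β c̄(x))` of it. -/
noncomputable def trialFlow (κ : ℤ → ℝ) (β : ℝ) : ℤ → ℝ :=
  glueHalfLines (fun n => expDecay (fun n => cbar κ ((n : ℤ) + 1)) β n / 2)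
    fun n => -(expDecay (fun n => cbar κ (-((n : ℤ) + 1))) β n / 2)

lemma trialFlow_natCast (κ : ℤ → ℝ) (β : ℝ) (n : ℕ) :
    trialFlow κ β n = expDecay (fun n => cbar κ ((n : ℤ) + 1)) β n / 2 :=
  glueHalfLines_natCast _ _ n

lemma trialFlow_neg (κ : ℤ → ℝ) (β : ℝ) (n : ℕ) :
    trialFlow κ β (-((n : ℤ) + 1)) = -(expDecay (fun n => cbar κ (-((n : ℤ) + 1))) β n / 2) :=
  glueHalfLines_neg _ _ n

/-- The current lost by `trialFlow` at each vertex, other than the unit injected at `0`. -/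
noncomputable def trialLeakage (κ : ℤ → ℝ) (β : ℝ) (x : ℤ) : ℝ :=
  (if x = 0 then 1 else 0) - trialFlow κ β x + trialFlow κ β (x - 1)

lemma trialLeakage_zero (κ : ℤ → ℝ) (β : ℝ) : trialLeakage κ β 0 = 0 := by
  have hright := trialFlow_natCast κ β 0
  have hleft := trialFlow_neg κ β 0
  rw [expDecay_zero] at hright hleft
  norm_num at hright hleft
  norm_num [trialLeakage, hright, hleft]

lemma trialLeakage_natCast_add_one (κ : ℤ → ℝ) (β : ℝ) (n : ℕ) :
    trialLeakage κ β ((n : ℤ) + 1) = (expDecay (fun n => cbar κ ((n : ℤ) + 1)) β n -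
      expDecay (fun n => cbar κ ((n : ℤ) + 1)) β (n + 1)) / 2 := by
  have hsucc := trialFlow_natCast κ β (n + 1)
  rw [Nat.cast_succ] at hsucc
  rw [trialLeakage, if_neg (by omega), add_sub_cancel_right, trialFlow_natCast, hsucc]
  ring

lemma trialLeakage_neg (κ : ℤ → ℝ) (β : ℝ) (n : ℕ) :
    trialLeakage κ β (-((n : ℤ) + 1)) = (expDecay (fun n => cbar κ (-((n : ℤ) + 1))) β n -
      expDecay (fun n => cbar κ (-((n : ℤ) + 1))) β (n + 1)) / 2 := by
  have hsucc := trialFlow_neg κ β (n + 1)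
  rw [Nat.cast_succ, neg_add'] at hsucc
  rw [trialLeakage, if_neg (by omega), trialFlow_neg, hsucc]
  ring

lemma exists_hasSum_trialFlow_energy (hκ : ∀ x, 0 < κ x) (hβ : 0 < β) (ht : 0 ≤ t)
    (h : ∀ n : ℕ, ∑ k ∈ Finset.range (n + 1), 1 / κ k ≤
      t * ∑ k ∈ Finset.range n, cbar κ ((k : ℤ) + 1) + C)
    (h' : ∀ n : ℕ, ∑ k ∈ Finset.range (n + 1), 1 / κ (-((k : ℤ) + 1)) ≤
      t * ∑ k ∈ Finset.range n, cbar κ (-((k : ℤ) + 1)) + C) :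
    ∃ E ≤ t / (4 * β) + C / 2, HasSum (fun x => trialFlow κ β x ^ 2 / κ x) E := by
  have hr (x : ℤ) : 0 ≤ 1 / κ x := (one_div_pos.2 (hκ x)).le
  have hc (x : ℤ) : 0 ≤ cbar κ x := (cbar_pos hκ x).le
  obtain ⟨E, hE_le, hE⟩ := exists_hasSum_le_of_halfLines
    (F := fun x => 4 * (trialFlow κ β x ^ 2 / κ x))
    (fun x => mul_nonneg zero_le_four (div_nonneg (sq_nonneg _) (hκ x).le))
    (fun n => by rw [trialFlow_natCast]; exact le_of_eq (by ring))
    (fun n => by rw [trialFlow_neg]; exact le_of_eq (by ring))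
    (expDecay_mass_le (fun _ => hc _) (fun _ => hr _) hβ ht h)
    (expDecay_mass_le (fun _ => hc _) (fun _ => hr _) hβ ht h')
  refine ⟨E / 4, ?_, (hE.div_const 4).congr_fun fun x => ?_⟩
  · rw [div_le_iff₀ zero_lt_four]
    exact hE_le.trans_eq (by field_simp; ring)
  · rw [mul_div_cancel_left₀ _ four_ne_zero]

lemma exists_hasSum_trialLeakage_mass (hκ : ∀ x, 0 < κ x) (hβ : 0 ≤ β) :
    ∃ V ≤ β / 4, HasSum (fun x => trialLeakage κ β x ^ 2 / cbar κ x) V := by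
  let F : ℤ → ℝ := fun x => 4 * (trialLeakage κ β x ^ 2 / cbar κ x)
  have hF (x : ℤ) : 0 ≤ F x :=
    mul_nonneg zero_le_four (div_nonneg (sq_nonneg _) (cbar_pos hκ x).le)
  have hright : (Summable fun n : ℕ => F n) ∧ ∑' n : ℕ, F n ≤ β / 2 := by
    have hF_succ (n : ℕ) : F ((n + 1 : ℕ) : ℤ) =
        (expDecay (fun n => cbar κ ((n : ℤ) + 1)) β n -
          expDecay (fun n => cbar κ ((n : ℤ) + 1)) β (n + 1)) ^ 2 / cbar κ ((n : ℤ) + 1) := by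
      simp only [F]
      rw [Nat.cast_succ, trialLeakage_natCast_add_one]
      ring
    have hF_zero : F (0 : ℕ) = 0 := by simp [F, trialLeakage_zero]
    obtain ⟨hsum, hle⟩ := expDecay_energy_le (fun n => cbar_pos hκ ((n : ℤ) + 1)) hβ
    have hsumF : Summable fun n : ℕ => F n :=
      (summable_nat_add_iff 1).1 (hsum.congr fun n => (hF_succ n).symm)
    refine ⟨hsumF, ?_⟩
    rwa [hsumF.tsum_eq_zero_add, hF_zero, zero_add, tsum_congr hF_succ]
  obtain ⟨V, hV_le, hV⟩ := exists_hasSum_le_of_halfLines hF (fun _ => le_rfl)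
    (fun n => by simp only [F]; rw [trialLeakage_neg]; exact le_of_eq (by ring)) hright
    (expDecay_energy_le (fun _ => cbar_pos hκ _) hβ)
  refine ⟨V / 4, by linarith, (hV.div_const 4).congr_fun fun x => ?_⟩
  rw [mul_div_cancel_left₀ _ four_ne_zero]

lemma exists_walkResolvent_le (hκ : ∀ x, 0 < κ x) (hB : HasMean (fun x => 1 / κ x) B)
    (hm : HasMean (cbar κ) m) (ht : 0 ≤ t) (hBm : B < t * m) :
    ∃ C, ∀ β > 0, ∀ z, 0 < z → z < 1 →
      walkResolvent κ z 0 ≤ (t / (4 * β) + C) / z + β / 4 / (1 - z) := by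
  obtain ⟨C₁, hC₁⟩ := exists_le_mul_add_of_tendsto_div hB.1 hm.1 hBm
  obtain ⟨C₂, hC₂⟩ := exists_le_mul_add_of_tendsto_div hB.2 hm.2 hBm
  have hshift (n : ℕ) : ∑ k ∈ Finset.range n, cbar κ k ≤
      ∑ k ∈ Finset.range n, cbar κ ((k : ℤ) + 1) + cbar κ 0 := by
    have hsucc := Finset.sum_range_succ' (fun k : ℕ => cbar κ k) n
    rw [Finset.sum_range_succ] at hsucc
    push_cast at hsucc
    linarith [cbar_pos hκ n]
  let C := max (C₁ + t * cbar κ 0) C₂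
  refine ⟨C / 2, fun β hβ z hz0 hz1 => ?_⟩
  obtain ⟨E, hE_le, hE⟩ := exists_hasSum_trialFlow_energy (C := C) hκ hβ ht
    (fun n => by linarith [hC₁ n, mul_le_mul_of_nonneg_left (hshift n) ht,
      le_max_left (C₁ + t * cbar κ 0) C₂])
    (fun n => (hC₂ n).trans (add_le_add_right (le_max_right _ _) _))
  obtain ⟨V, hV_le, hV⟩ := exists_hasSum_trialLeakage_mass hκ hβ.le
  exact (thomson_principle hκ hz0 hz1 (fun _ => rfl) hE hV).trans
    (add_le_add (div_le_div_of_nonneg_right hE_le hz0.le)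
      (div_le_div_of_nonneg_right hV_le (sub_nonneg.2 hz1.le)))

lemma tendsto_sqrt_one_sub : Tendsto (fun z : ℝ => √(1 - z)) (𝓝[<] 1) (𝓝 0) := by
  have hcont : Continuous fun z : ℝ => √(1 - z) := by fun_prop
  simpa using (hcont.tendsto 1).mono_left nhdsWithin_le_nhds

lemma eventually_lt_sqrt_mul_walkResolvent (hκ : ∀ x, 0 < κ x)
    (hB : HasMean (fun x => 1 / κ x) B) (hm : HasMean (cbar κ) m) (hB0 : 0 < B) (hm0 : 0 < m)
    {l : ℝ} (hl : l < √(B / m) / 2) :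
    ∀ᶠ z in 𝓝[<] 1, l < √(1 - z) * walkResolvent κ z 0 := by
  obtain ⟨t, ht, hlt⟩ : ∃ t > m / B, 2 * √t * l < 1 := by
    have hcont : Continuous fun t : ℝ => 2 * √t * l := by fun_prop
    have hlt : 2 * √(m / B) * l < 1 := by
      have hone : √(m / B) * √(B / m) = 1 := by
        rw [← Real.sqrt_mul (by positivity), div_mul_div_cancel₀ hB0.ne', div_self hm0.ne',
          Real.sqrt_one]
      have hpos : 0 < √(m / B) := by positivity
      nlinarith
    exact ((hcont.tendsto _).eventually_lt_const hlt).exists_gt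
  have ht0 : 0 < t := (div_pos hm0 hB0).trans ht
  obtain ⟨C, hC⟩ := exists_one_le_mul_walkResolvent hκ hB hm ht0.le ((div_lt_iff₀ hB0).1 ht)
  have hlim : Tendsto (fun z : ℝ => 2 * √t + √(1 - z) * C) (𝓝[<] 1) (𝓝 (2 * √t + 0 * C)) :=
    tendsto_const_nhds.add (tendsto_sqrt_one_sub.mul_const C)
  filter_upwards [hlim.eventually_const_lt (show 0 < 2 * √t + 0 * C by simpa using ht0),
    (hlim.mul_const l).eventually_lt_const (show (2 * √t + 0 * C) * l < 1 by linarith),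
    Ioo_mem_nhdsLT zero_lt_one] with z hpos hlt hz
  have hw : 0 < √(1 - z) := Real.sqrt_pos.2 (sub_pos.2 hz.2)
  have hbound : (√t * √(1 - z) + (1 - z) * (t / (√t * √(1 - z)) + C)) =
      (2 * √t + √(1 - z) * C) * √(1 - z) := by
    have hdiv : (1 - z) * (t / (√t * √(1 - z))) = √t * √(1 - z) := by
      rw [mul_div_assoc', mul_comm (1 - z), mul_div_mul_comm, Real.div_sqrt, Real.div_sqrt]
    linear_combination hdiv - C * Real.mul_self_sqrt (sub_nonneg.2 hz.2.le)
  have hone := hC (√t * √(1 - z)) (by positivity) z hz.1.le hz.2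
  rw [hbound, mul_assoc] at hone
  exact lt_of_mul_lt_mul_left (hlt.trans_le hone) hpos.le

lemma eventually_sqrt_mul_walkResolvent_lt (hκ : ∀ x, 0 < κ x)
    (hB : HasMean (fun x => 1 / κ x) B) (hm : HasMean (cbar κ) m) (hB0 : 0 < B) (hm0 : 0 < m)
    {u : ℝ} (hu : √(B / m) / 2 < u) :
    ∀ᶠ z in 𝓝[<] 1, √(1 - z) * walkResolvent κ z 0 < u := by
  obtain ⟨t, ht, htu⟩ : ∃ t > B / m, √t / 2 < u := by
    have hcont : Continuous fun t : ℝ => √t / 2 := by fun_prop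
    exact ((hcont.tendsto _).eventually_lt_const hu).exists_gt
  have ht0 : 0 < t := (div_pos hB0 hm0).trans ht
  obtain ⟨C, hC⟩ := exists_walkResolvent_le hκ hB hm ht0.le ((div_lt_iff₀ hm0).1 ht)
  have hlim : Tendsto (fun z : ℝ => (√t / 4 + √(1 - z) * C) / z + √t / 4) (𝓝[<] 1)
      (𝓝 ((√t / 4 + 0 * C) / 1 + √t / 4)) :=
    ((tendsto_const_nhds.add (tendsto_sqrt_one_sub.mul_const C)).div
      (tendsto_id.mono_left nhdsWithin_le_nhds) one_ne_zero).add_const _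
  filter_upwards [hlim.eventually_lt_const
      (show (√t / 4 + 0 * C) / 1 + √t / 4 < u by linarith),
    Ioo_mem_nhdsLT zero_lt_one] with z hlt hz
  have hw : 0 < √(1 - z) := Real.sqrt_pos.2 (sub_pos.2 hz.2)
  have hle := mul_le_mul_of_nonneg_left (hC (√t * √(1 - z)) (by positivity) z hz.1 hz.2) hw.le
  refine hle.trans_lt (lt_of_eq_of_lt ?_ hlt)
  have hflow : √(1 - z) * (t / (4 * (√t * √(1 - z)))) = √t / 4 := by
    rw [mul_div_assoc', mul_comm √(1 - z), ← mul_assoc, mul_div_mul_right _ _ hw.ne',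
      mul_comm 4 √t, div_mul_eq_div_div, Real.div_sqrt]
  have hleak : √(1 - z) * (√(1 - z) / (1 - z)) = 1 := by
    rw [Real.sqrt_div_self', mul_one_div_cancel hw.ne']
  linear_combination hflow / z + √t / 4 * hleak

theorem tendsto_sqrt_mul_walkResolvent (hκ : ∀ x, 0 < κ x) (hB : HasMean (fun x => 1 / κ x) B)
    (hm : HasMean (cbar κ) m) (hB0 : 0 < B) (hm0 : 0 < m) :
    Tendsto (fun z => √(1 - z) * walkResolvent κ z 0) (𝓝[<] 1) (𝓝 (√(B / m) / 2)) :=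
  tendsto_order.2 ⟨fun _ => eventually_lt_sqrt_mul_walkResolvent hκ hB hm hB0 hm0,
    fun _ => eventually_sqrt_mul_walkResolvent_lt hκ hB hm hB0 hm0⟩

end TrialFunctions

section LocalLimit

variable {κ : ℤ → ℝ} {B m : ℝ}

lemma tendsto_sqrt_nhdsLT_one : Tendsto Real.sqrt (𝓝[<] 1) (𝓝[<] 1) := by
  refine tendsto_nhdsWithin_iff.2 ⟨?_, ?_⟩
  · simpa only [Real.sqrt_one] using (Real.continuous_sqrt.tendsto 1).mono_left nhdsWithin_le_nhds
  · filter_upwards [self_mem_nhdsWithin] with s (hs : s < 1)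
    exact (Real.sqrt_lt' one_pos).2 (by rwa [one_pow])

lemma hasSum_heatK_even_walkResolvent_sqrt (hκ : ∀ x, 0 < κ x) {s : ℝ}
    (hs : s ∈ Set.Ioo (0 : ℝ) 1) :
    HasSum (fun n => heatK κ (2 * n) 0 * s ^ n) (walkResolvent κ (√s) 0) := by
  have hlt : √s < 1 := (Real.sqrt_lt' one_pos).2 (by simpa using hs.2)
  simpa only [Real.sq_sqrt hs.1.le] using hasSum_heatK_even_mul_pow hκ (Real.sqrt_nonneg s) hlt

lemma tendsto_abelMean_heatK (hκ : ∀ x, 0 < κ x) (hB : HasMean (fun x => 1 / κ x) B)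
    (hm : HasMean (cbar κ) m) (hB0 : 0 < B) (hm0 : 0 < m) :
    Tendsto (abelMean (1 / 2) (fun n => heatK κ (2 * n) 0) fun _ => 1) (𝓝[<] 1)
      (𝓝 (√2 * (√(B / m) / 2))) := by
  have hfactor : Tendsto (fun s : ℝ => √(1 + √s)) (𝓝[<] 1) (𝓝 √2) := by
    have hcont : Continuous fun s : ℝ => √(1 + √s) := by fun_prop
    simpa [one_add_one_eq_two] using (hcont.tendsto 1).mono_left nhdsWithin_le_nhds
  have hres := (tendsto_sqrt_mul_walkResolvent hκ hB hm hB0 hm0).comp tendsto_sqrt_nhdsLT_one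
  refine (hfactor.mul hres).congr' ?_
  filter_upwards [Ioo_mem_nhdsLT zero_lt_one] with s hs
  simp only [abelMean, mul_one, (hasSum_heatK_even_walkResolvent_sqrt hκ hs).tsum_eq,
    Function.comp_apply, ← Real.sqrt_eq_rpow]
  rw [← mul_assoc, ← Real.sqrt_mul (by positivity)]
  congr 2
  linear_combination -Real.sq_sqrt hs.1.le

theorem tendsto_sqrt_mul_walk (hκ : ∀ x, 0 < κ x) (hB : HasMean (fun x => 1 / κ x) B)
    (hm : HasMean (cbar κ) m) (hB0 : 0 < B) (hm0 : 0 < m) {x : ℤ} (hx : Even x) :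
    Tendsto (fun n : ℕ => √(2 * n) * walk κ (2 * n) 0 x) atTop
      (𝓝 (cbar κ x / √Real.pi * √(B / m))) := by
  have hreturn := tendsto_rpow_mul_of_tendsto_abelMean (fun n => heatK_nonneg hκ (2 * n) 0)
    (antitone_heatK_even hκ) (fun s hs => (hasSum_heatK_even_walkResolvent_sqrt hκ hs).summable)
    (tendsto_abelMean_heatK hκ hB hm hB0 hm0) one_half_pos one_half_lt_one.le
  rw [Real.Gamma_one_half_eq, sub_half] at hreturn
  simp only [← Real.sqrt_eq_rpow] at hreturn
  have hlimit : cbar κ x * (√2 * (√2 * (√(B / m) / 2) / √Real.pi))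
      = cbar κ x / √Real.pi * √(B / m) := by
    linear_combination cbar κ x * √(B / m) / (2 * √Real.pi) * Real.mul_self_sqrt zero_le_two
  rw [← hlimit]
  refine ((tendsto_sqrt_mul_heatK hκ hreturn hx).const_mul (cbar κ x)).congr fun n => ?_
  rw [heatK, mul_left_comm, mul_div_cancel₀ _ (cbar_pos hκ x).ne']

end LocalLimit

lemma cbar_envC {Ω : Type*} (T : Equiv.Perm Ω) (c : Ω → ℝ) (ω : Ω) (x : ℤ) :
    cbar (envC T c ω) x = c (T.symm ((T ^ x) ω)) + c ((T ^ x) ω) := by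
  rw [cbar, envC, envC, sub_eq_neg_add, zpow_add, zpow_neg_one, Equiv.Perm.mul_apply,
    Equiv.Perm.inv_def]

section Environment

variable {Ω : Type*} [MeasurableSpace Ω] {μ : Measure Ω} {T : Equiv.Perm Ω}

lemma ergodic_perm_symm (hT : Ergodic T μ) (hTsymm : MeasurePreserving T.symm μ μ) :
    Ergodic T.symm μ := by
  refine ⟨hTsymm, ⟨fun s hs hinv => hT.aeconst_set hs ?_⟩⟩
  rw [← hinv, ← Set.preimage_comp, Equiv.symm_comp_self, Set.preimage_id, hinv]

lemma ae_hasMean_orbit [IsProbabilityMeasure μ] (hT : Ergodic T μ)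
    (hTsymm : MeasurePreserving T.symm μ μ) {f : Ω → ℝ} (hf : Integrable f μ) :
    ∀ᵐ ω ∂μ, HasMean (fun x => f ((T ^ x) ω)) (∫ ω, f ω ∂μ) := by
  have hpast := ae_tendsto_birkhoffAverage (ergodic_perm_symm hT hTsymm)
    (hTsymm.integrable_comp_of_integrable hf)
  filter_upwards [ae_tendsto_birkhoffAverage hT hf, hpast] with ω hfut hpast
  have hpow (k : ℕ) : (T ^ (k : ℤ)) ω = T^[k] ω := by
    rw [zpow_natCast, Equiv.Perm.iterate_eq_pow]
  have hpow_neg (k : ℕ) : (T ^ (-((k : ℤ) + 1))) ω = T.symm (T.symm^[k] ω) := by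
    rw [← Function.iterate_succ_apply' T.symm, Equiv.Perm.iterate_eq_pow, ← Equiv.Perm.inv_def,
      inv_pow, ← zpow_natCast, ← zpow_neg, Nat.cast_succ]
  simp only [Function.comp_def, integral_comp_of_measurePreserving hTsymm hf.1] at hpast
  constructor
  · simpa only [birkhoffAverage, birkhoffSum, smul_eq_mul, inv_mul_eq_div, hpow] using hfut
  · simpa only [birkhoffAverage, birkhoffSum, smul_eq_mul, inv_mul_eq_div, hpow_neg] using hpast

lemma integral_pos_of_pos [NeZero μ] {f : Ω → ℝ} (hf : Integrable f μ) (hpos : ∀ ω, 0 < f ω) :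
    0 < ∫ ω, f ω ∂μ := by
  rw [integral_pos_iff_support_of_nonneg (fun ω => (hpos ω).le) hf,
    Function.support_eq_univ fun ω => (hpos ω).ne']
  exact Measure.measure_univ_pos.mpr (NeZero.ne μ)

end Environment

/-- Local limit theorem in dimension one, stationary environment of conductances:
if `1/c` and `c̄ = c∘T⁻¹ + c` are integrable then, for a.e. environment `ω` and
every even `x₀`,
`√(2n)·P_0^ω[S_{2n} = x₀] → (c̄(x₀)(ω)/√π)·√(∫(1/c)dμ / ∫c̄ dμ)`. -/
theorem local_limit_theorem_conductances {Ω : Type*} [MeasurableSpace Ω]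
    (μ : Measure Ω) [IsProbabilityMeasure μ]
    (T : Equiv.Perm Ω) (hT : Ergodic T μ)
    (hTsymm : MeasurePreserving T.symm μ μ)
    (c : Ω → ℝ) (hc : Measurable c) (hcpos : ∀ ω, 0 < c ω)
    (hres : Integrable (fun ω => 1 / c ω) μ)
    (hcbar : Integrable (fun ω => c (T.symm ω) + c ω) μ) :
    ∀ᵐ ω ∂μ, ∀ x₀ : ℤ, Even x₀ →
      Tendsto (fun n : ℕ => Real.sqrt (2 * n) * walk (envC T c ω) (2 * n) 0 x₀)
        atTop
        (nhds ((cbar (envC T c ω) x₀ / Real.sqrt Real.pi) *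
          Real.sqrt ((∫ ω, 1 / c ω ∂μ) / (∫ ω, (c (T.symm ω) + c ω) ∂μ)))) := by
  have hB := integral_pos_of_pos hres fun ω => one_div_pos.2 (hcpos ω)
  have hm := integral_pos_of_pos hcbar fun ω => add_pos (hcpos _) (hcpos ω)
  filter_upwards [ae_hasMean_orbit hT hTsymm hres, ae_hasMean_orbit hT hTsymm hcbar]
    with ω hres_mean hcbar_mean x₀ hx₀
  rw [← funext (cbar_envC T c ω)] at hcbar_mean
  exact tendsto_sqrt_mul_walk (fun x => hcpos _) hres_mean hcbar_mean hB hm hx₀
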